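/- arXiv:2604.11718 — 4 statements merged into one kernel-verified Lean document; each statement's English description precedes it below -/
import Mathlib

section
/- Let M > 0 and ν ∈ (0, 1/2]. Let G₁, G₂ : (0,M) → ℝ be smooth positive functions with G₁(a) ≤ G₂(a) for all a ∈ (0,M), and suppose both satisfy lim_{a→0⁺} Gᵢ(a)/(4πa) = 1. Then κ₁(G₂) ≤ κ₁(G₁). If moreover G₁ < G₂ on a set of positive Lebesgue measure, then κ₁(G₂) < κ₁(G₁). -/
open MeasureTheory Real Set Filter

/-- The Rayleigh quotient of a function `f` for the one-dimensional magnetic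
Sturm–Liouville problem on `(0, M)` with weight `G` and flux `ν`. -/
noncomputable def rayleigh (M ν : ℝ) (G f : ℝ → ℝ) : ℝ :=
  (∫ a in Ioo (0:ℝ) M, (G a * (deriv f a) ^ 2 + 4 * π ^ 2 * ν ^ 2 * (f a) ^ 2 / G a)) /
    ∫ a in Ioo (0:ℝ) M, (f a) ^ 2

/-- The admissible class `𝓕(G)`: measurable functions on `(0, M)`, not a.e. zero,
differentiable, with `f ∈ L²`, `√G · f' ∈ L²` and `f/√G ∈ L²`. -/
def Admissible (M : ℝ) (G f : ℝ → ℝ) : Prop :=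
  Measurable f ∧
  ¬ (∀ᵐ a ∂(volume.restrict (Ioo (0:ℝ) M)), f a = 0) ∧
  (∀ a ∈ Ioo (0:ℝ) M, DifferentiableAt ℝ f a) ∧
  IntegrableOn (fun a => (f a) ^ 2) (Ioo 0 M) ∧
  IntegrableOn (fun a => G a * (deriv f a) ^ 2) (Ioo 0 M) ∧
  IntegrableOn (fun a => (f a) ^ 2 / G a) (Ioo 0 M)

/-- `κ₁(G)`: the infimum of the Rayleigh quotient over the admissible class. -/
noncomputable def kappa1 (M ν : ℝ) (G : ℝ → ℝ) : ℝ :=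
  sInf { q | ∃ f : ℝ → ℝ, Admissible M G f ∧ q = rayleigh M ν G f }

lemma comp_le_zero {d d' : ℝ → ℝ} {a b K : ℝ}
    (hd : ∀ x ∈ Icc a b, HasDerivAt d (d' x) x) (h0 : d a ≤ 0)
    (hK : ∀ x ∈ Icc a b, 0 < d x → d' x ≤ K * d x) :
    ∀ x ∈ Icc a b, d x ≤ 0 := by
  intro x hx
  have key : ∀ ε > 0, d x ≤ ε * exp ((K + 1) * x) := by
    intro ε hε
    refine image_le_of_deriv_right_lt_deriv_boundary (f := d) (f' := d') (a := a) (b := b)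
      (B := fun x => ε * exp ((K + 1) * x)) (B' := fun x => ε * (exp ((K + 1) * x) * (K + 1)))
      (fun y hy => (hd y hy).continuousAt.continuousWithinAt)
      (fun y hy => (hd y (Ico_subset_Icc_self hy)).hasDerivWithinAt) ?_ ?_ ?_ hx
    · exact h0.trans (by positivity)
    · intro y
      have := ((hasDerivAt_id y).const_mul (K + 1)).exp.const_mul ε
      simpa using this
    · intro y hy hyd
      have hpos : 0 < ε * exp ((K + 1) * y) := by positivity
      have := hK y (Ico_subset_Icc_self hy) (by rw [hyd]; exact hpos)
      rw [hyd] at this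
      linarith
  by_contra hcon
  push Not at hcon
  have h1 := key (d x / (2 * exp ((K + 1) * x))) (by positivity)
  have h2 : d x / (2 * exp ((K + 1) * x)) * exp ((K + 1) * x) = d x / 2 := by
    have := exp_pos ((K + 1) * x)
    field_simp
  linarith

/-- truncated quadratic -/
noncomputable def phiT (c x : ℝ) : ℝ := max (c ^ 2 - x ^ 2) 0

lemma phiT_nonneg (c x : ℝ) : 0 ≤ phiT c x := le_max_right _ _

lemma phiT_ge (c x : ℝ) : c ^ 2 - x ^ 2 ≤ phiT c x := le_max_left _ _

lemma phiT_le (c x : ℝ) : phiT c x ≤ c ^ 2 :=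
  max_le (by nlinarith [sq_nonneg x]) (sq_nonneg c)

lemma phiT_self (c : ℝ) : phiT c c = 0 := by simp [phiT]

lemma phiT_eq {c x : ℝ} (h1 : -c ≤ x) (h2 : x ≤ c) : phiT c x = c ^ 2 - x ^ 2 :=
  max_eq_left (by nlinarith)

lemma phiT_zero {c x : ℝ} (hc : 0 < c) (h : x ≤ -c ∨ c ≤ x) : phiT c x = 0 :=
  max_eq_right (by rcases h with h | h <;> nlinarith)

lemma phiT_cont (c : ℝ) : Continuous (phiT c) := by unfold phiT; fun_prop

lemma phiT_lip {c : ℝ} (hc : 0 < c) (x y : ℝ) : |phiT c x - phiT c y| ≤ 2 * c * |x - y| := by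
  wlog hxy : y ≤ x generalizing x y
  · rw [abs_sub_comm, abs_sub_comm x]; exact this y x (by linarith)
  rw [abs_of_nonneg (sub_nonneg.2 hxy)]
  rcases le_total x (-c) with hx1 | hx1
  · rw [phiT_zero hc (Or.inl hx1), phiT_zero hc (Or.inl (hxy.trans hx1))]
    simp; nlinarith
  rcases le_total c y with hy1 | hy1
  · rw [phiT_zero hc (Or.inr hy1), phiT_zero hc (Or.inr (hy1.trans hxy))]
    simp; nlinarith
  rcases le_total x c with hx2 | hx2 <;> rcases le_total y (-c) with hy2 | hy2
  · rw [phiT_eq hx1 hx2, phiT_zero hc (Or.inl hy2), abs_le]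
    constructor <;> nlinarith
  · rw [phiT_eq hx1 hx2, phiT_eq hy2 hy1, abs_le]
    constructor <;> nlinarith
  · rw [phiT_zero hc (Or.inr hx2), phiT_zero hc (Or.inl hy2)]
    simp; nlinarith
  · rw [phiT_zero hc (Or.inr hx2), phiT_eq hy2 hy1, abs_le]
    constructor <;> nlinarith

lemma exists_sol {c M L lam : ℝ} (hc : 0 < c) (hM : 0 < M) {H : ℝ → ℝ} (hH : Continuous H)
    (h0 : ∀ x, 0 ≤ H x) (hL : ∀ x, H x ≤ L) (hlam : 0 ≤ lam) :
    ∃ w : ℝ → ℝ, w 0 = c ∧ ∀ x ∈ Icc 0 M, HasDerivAt w (phiT c (w x) * H x - lam) x := by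
  have hL0 : 0 ≤ L := (h0 0).trans (hL 0)
  let B : NNReal := ⟨c ^ 2 * L + lam, by positivity⟩
  let A : NNReal := ⟨(c ^ 2 * L + lam) * (M + 1), by positivity⟩
  let K : NNReal := ⟨2 * c * L, by positivity⟩
  have hp : IsPicardLindelof (fun t x => phiT c x * H t - lam) (tmin := -1) (tmax := M + 1)
      ⟨0, by constructor <;> linarith⟩ c A 0 B K := by
    constructor
    · intro t _
      apply LipschitzOnWith.of_dist_le_mul
      intro x _ y _
      rw [Real.dist_eq, Real.dist_eq]
      have e : phiT c x * H t - lam - (phiT c y * H t - lam) = (phiT c x - phiT c y) * H t := by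
        ring
      rw [e, abs_mul, abs_of_nonneg (h0 t)]
      have h1 := phiT_lip hc x y
      change _ ≤ 2 * c * L * |x - y|
      calc _ ≤ (2 * c * |x - y|) * L := by
            apply mul_le_mul h1 (hL t) (h0 t); positivity
        _ = _ := by ring
    · intro x _
      fun_prop
    · intro t _ x _
      rw [Real.norm_eq_abs, abs_le]
      change -(c ^ 2 * L + lam) ≤ _ ∧ _ ≤ c ^ 2 * L + lam
      have h1 := phiT_nonneg c x
      have h2 := phiT_le c x
      have h3 : phiT c x * H t ≤ c ^ 2 * L := mul_le_mul h2 (hL t) (h0 t) (by positivity)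
      have h4 : 0 ≤ phiT c x * H t := mul_nonneg h1 (h0 t)
      have h5 : 0 ≤ c ^ 2 * L := by positivity
      constructor <;> linarith
    · change (c ^ 2 * L + lam) * max (M + 1 - 0) (0 - (-1)) ≤ (c ^ 2 * L + lam) * (M + 1) - 0
      rw [max_eq_left (by linarith)]
      simp
  obtain ⟨w, hw0, hw⟩ := hp.exists_eq_forall_mem_Icc_hasDerivWithinAt₀
  refine ⟨w, hw0, fun x hx => ?_⟩
  exact (hw x ⟨by linarith [hx.1], by linarith [hx.2]⟩).hasDerivAt
    (Icc_mem_nhds (by linarith [hx.1]) (by linarith [hx.2]))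

/-- `w ≤ c`. -/
lemma sol_le {c M lam : ℝ} (hc : 0 < c) {H w : ℝ → ℝ} (hlam : 0 ≤ lam) (hw0 : w 0 = c)
    (hw : ∀ x ∈ Icc 0 M, HasDerivAt w (phiT c (w x) * H x - lam) x) :
    ∀ x ∈ Icc 0 M, w x ≤ c := by
  intro x hx
  have := comp_le_zero (d := fun x => w x - c) (K := 0)
    (fun y hy => (hw y hy).sub_const c) (by simp [hw0]) (by
      intro y hy hpos
      rw [phiT_zero hc (Or.inr (by linarith))]
      linarith) x hx
  linarith

lemma sol_ge_neg {c M L lam : ℝ} (hc : 0 < c) {H w : ℝ → ℝ}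
    (h0 : ∀ x, 0 ≤ H x) (hL : ∀ x, H x ≤ L) (hlam : 0 ≤ lam)
    (hw : ∀ x ∈ Icc 0 M, HasDerivAt w (phiT c (w x) * H x - lam) x) (hwM : 0 < w M) :
    ∀ x ∈ Icc 0 M, -c ≤ w x := by
  intro x hx
  by_contra hcon
  push Not at hcon
  have := comp_le_zero (a := x) (b := M) (d := fun x => w x + c) (K := 2 * c * L)
    (fun y hy => (hw y ⟨hx.1.trans hy.1, hy.2⟩).add_const c) (by linarith) (by
      intro y hy hpos
      have h1 := phiT_lip hc (w y) (-c)
      rw [phiT_zero (x := -c) hc (Or.inl le_rfl), sub_zero, abs_of_nonneg (phiT_nonneg _ _),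
        sub_neg_eq_add, abs_of_pos hpos] at h1
      have : phiT c (w y) * H y ≤ (2 * c * (w y + c)) * L :=
        mul_le_mul h1 (hL y) (h0 y) (by positivity)
      linarith) M ⟨hx.2, le_rfl⟩
  linarith

lemma sol_ge {c M lam : ℝ} {H w : ℝ → ℝ}
    (h0 : ∀ x, 0 ≤ H x) (hw0 : w 0 = c)
    (hw : ∀ x ∈ Icc 0 M, HasDerivAt w (phiT c (w x) * H x - lam) x) :
    ∀ x ∈ Icc 0 M, c - lam * x ≤ w x := by
  intro x hx
  have := comp_le_zero (d := fun x => c - lam * x - w x) (K := 0) (a := 0) (b := M)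
    (fun y hy => (((hasDerivAt_id y).const_mul lam).const_sub c).sub (hw y hy)) (by simp [hw0]) (by
      intro y hy hpos
      have := mul_nonneg (phiT_nonneg c (w y)) (h0 y)
      linarith) x hx
  linarith

/-- `w x + lam * x` is monotone. -/
lemma sol_le_end {c M lam : ℝ} {H w : ℝ → ℝ}
    (h0 : ∀ x, 0 ≤ H x)
    (hw : ∀ x ∈ Icc 0 M, HasDerivAt w (phiT c (w x) * H x - lam) x) :
    ∀ x ∈ Icc 0 M, w x ≤ w M + lam * (M - x) := by
  intro x hx
  have := comp_le_zero (d := fun y => w x + lam * x - lam * y - w y) (K := 0) (a := x) (b := M)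
    (fun y hy => (((hasDerivAt_id y).const_mul lam).const_sub (w x + lam * x)).sub
      (hw y ⟨hx.1.trans hy.1, hy.2⟩)) (by simp) (by
      intro y hy hpos
      have := mul_nonneg (phiT_nonneg c (w y)) (h0 y)
      linarith) M ⟨hx.2, le_rfl⟩
  linarith

lemma sol_mono {c M L lam : ℝ} (hc : 0 < c) {H H' w w' : ℝ → ℝ}
    (h0 : ∀ x, 0 ≤ H x) (hL : ∀ x, H x ≤ L) (hHH : ∀ x, H x ≤ H' x)
    (hw0 : w 0 = c) (hw0' : w' 0 = c)
    (hw : ∀ x ∈ Icc 0 M, HasDerivAt w (phiT c (w x) * H x - lam) x)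
    (hw' : ∀ x ∈ Icc 0 M, HasDerivAt w' (phiT c (w' x) * H' x - lam) x) :
    ∀ x ∈ Icc 0 M, w x ≤ w' x := by
  intro x hx
  have := comp_le_zero (d := fun x => w x - w' x) (K := 2 * c * L)
    (fun y hy => (hw y hy).sub (hw' y hy)) (by simp [hw0, hw0']) (by
      intro y hy hpos
      have h1 := (le_abs_self _).trans (phiT_lip hc (w y) (w' y))
      rw [abs_of_pos hpos] at h1
      have h2 : (phiT c (w y) - phiT c (w' y)) * H y ≤ (2 * c * (w y - w' y)) * L := 
        (mul_le_mul_of_nonneg_right h1 (h0 y)).trans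
          (mul_le_mul_of_nonneg_left (hL y) (by positivity))
      have h3 := mul_le_mul_of_nonneg_left (hHH y) (phiT_nonneg c (w' y))
      linarith) x hx
  linarith

lemma sol_open {c M L lam : ℝ} (hc : 0 < c) (hM : 0 < M) {H w : ℝ → ℝ} (hH : Continuous H)
    (h0 : ∀ x, 0 ≤ H x) (hL : ∀ x, H x ≤ L) (hlam : 0 ≤ lam) (hw0 : w 0 = c)
    (hw : ∀ x ∈ Icc 0 M, HasDerivAt w (phiT c (w x) * H x - lam) x) (hwM : 0 < w M) :
    ∃ δ > 0, ∃ w' : ℝ → ℝ, w' 0 = c ∧ 0 < w' M ∧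
      ∀ x ∈ Icc 0 M, HasDerivAt w' (phiT c (w' x) * H x - (lam + δ)) x := by
  have hL0 : 0 ≤ L := (h0 0).trans (hL 0)
  set K := 2 * c * L with hK
  have hK0 : 0 ≤ K := by positivity
  set δ := w M / (2 * exp ((K + 1) * M)) with hδ
  have hδ0 : 0 < δ := by positivity
  have hδ2 : δ * exp ((K + 1) * M) = w M / 2 := by
    rw [hδ]; have := exp_pos ((K + 1) * M); field_simp
  obtain ⟨w', hw0', hw'⟩ := exists_sol hc hM hH h0 hL (lam := lam + δ) (by positivity)
  refine ⟨δ, hδ0, w', hw0', ?_, hw'⟩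
  have := comp_le_zero (d := fun x => w x - w' x - δ * exp ((K + 1) * x)) (K := K)
    (d' := fun x => phiT c (w x) * H x - lam - (phiT c (w' x) * H x - (lam + δ)) -
      δ * (exp ((K + 1) * x) * (K + 1)))
    (fun y hy => ((hw y hy).sub (hw' y hy)).sub (by
      have := ((hasDerivAt_id y).const_mul (K + 1)).exp.const_mul δ
      simpa using this)) (by simp [hw0, hw0', hδ0.le]) (by
      intro y hy hpos
      have hexp : 1 ≤ exp ((K + 1) * y) := one_le_exp (mul_nonneg (by linarith) hy.1)
      have hpos' : 0 < w y - w' y := by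
        have : 0 < δ * exp ((K + 1) * y) := by positivity
        linarith
      have h1 := (le_abs_self _).trans (phiT_lip hc (w y) (w' y))
      rw [abs_of_pos hpos'] at h1
      have h2 : (phiT c (w y) - phiT c (w' y)) * H y ≤ (2 * c * (w y - w' y)) * L := 
        (mul_le_mul_of_nonneg_right h1 (h0 y)).trans
          (mul_le_mul_of_nonneg_left (hL y) (by positivity))
      have h3 := mul_le_mul_of_nonneg_left hexp hδ0.le
      have h4 : (2 * c * (w y - w' y)) * L = K * (w y - w' y) := by rw [hK]; ring
      linarith) M ⟨hM.le, le_rfl⟩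
  linarith

lemma num_integrable {M ν : ℝ} {G f : ℝ → ℝ} (h : Admissible M G f) :
    IntegrableOn (fun a => G a * (deriv f a) ^ 2 + 4 * π ^ 2 * ν ^ 2 * (f a) ^ 2 / G a)
      (Ioo 0 M) := by
  obtain ⟨_, _, _, _, h5, h6⟩ := h
  refine h5.add ((h6.const_mul (4 * π ^ 2 * ν ^ 2)).congr (ae_of_all _ fun a => ?_))
  simp only [mul_div_assoc]

lemma den_pos {M : ℝ} {G f : ℝ → ℝ} (h : Admissible M G f) :
    0 < ∫ a in Ioo (0:ℝ) M, (f a) ^ 2 := by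
  obtain ⟨_, h2, _, h4, _, _⟩ := h
  refine lt_of_le_of_ne (integral_nonneg fun a => sq_nonneg _) fun h0 => h2 ?_
  have := (integral_eq_zero_iff_of_nonneg (fun a => sq_nonneg (f a)) h4).1 h0.symm
  filter_upwards [this] with a ha
  simpa using ha

lemma small_near_zero {M : ℝ} (hM : 0 < M) {G g : ℝ → ℝ}
    (hp : ∀ a ∈ Ioo (0:ℝ) M, 0 < G a)
    (h₁ : Tendsto (fun a => G a / (4 * π * a)) (nhdsWithin 0 (Ioo 0 M)) (nhds 1))
    (hg : IntegrableOn (fun a => (g a) ^ 2 / G a) (Ioo 0 M))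
    (ε η : ℝ) (hε : 0 < ε) (hη : 0 < η) : ∃ a ∈ Ioo 0 M, a < η ∧ (g a) ^ 2 < ε := by
  by_contra hcon
  push Not at hcon
  have h2 : ∀ᶠ a in nhdsWithin (0:ℝ) (Ioo 0 M), G a / (4 * π * a) < 2 :=
    h₁.eventually (gt_mem_nhds (by norm_num))
  rw [eventually_nhdsWithin_iff, Metric.eventually_nhds_iff] at h2
  obtain ⟨r, hr, h2⟩ := h2
  set s := min (min r η) M with hs
  have hs0 : 0 < s := by positivity
  have hintegr : IntegrableOn (fun x : ℝ => x⁻¹) (Ioo 0 s) := by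
    have h3 : IntegrableOn (fun a => (8 * π / ε) * ((g a) ^ 2 / G a)) (Ioo 0 s) :=
      Integrable.const_mul (hg.mono_set (Ioo_subset_Ioo_right (min_le_right _ _))) _
    refine Integrable.mono' h3 (measurable_inv.aestronglyMeasurable) ?_
    refine (ae_restrict_iff' measurableSet_Ioo).2 (ae_of_all _ fun a ha => ?_)
    have haM : a ∈ Ioo 0 M := ⟨ha.1, ha.2.trans_le (min_le_right _ _)⟩
    have har : a < r := ha.2.trans_le ((min_le_left _ _).trans (min_le_left _ _))
    have haη : a < η := ha.2.trans_le ((min_le_left _ _).trans (min_le_right _ _))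
    have h4 := h2 (y := a) (by simpa [abs_of_pos ha.1] using har) haM
    have h5 := hcon a haM haη
    have ha0 := ha.1
    have hG := hp a haM
    rw [div_lt_iff₀ (by positivity)] at h4
    rw [norm_inv, Real.norm_eq_abs, abs_of_pos ha0, div_mul_div_comm, inv_eq_one_div,
      div_le_div_iff₀ ha0 (by positivity)]
    have h6 : ε * G a ≤ ε * (8 * π * a) := by
      apply mul_le_mul_of_nonneg_left _ hε.le; linarith
    have h7 : 8 * π * a * ε ≤ 8 * π * a * (g a) ^ 2 :=
      mul_le_mul_of_nonneg_left h5 (by positivity)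
    linarith
  have h8 : IntervalIntegrable (fun x : ℝ => x⁻¹) volume 0 s := by
    rw [intervalIntegrable_iff_integrableOn_Ioo_of_le hs0.le]
    exact hintegr
  rw [intervalIntegrable_inv_iff] at h8
  rcases h8 with h8 | h8
  · linarith
  · exact h8 left_mem_uIcc

lemma lower_bound {M ν lam c : ℝ} (hM : 0 < M) (hcν : c = 2 * π * ν) (hc : 0 < c)
    (hlam : 0 ≤ lam) {G w dw g : ℝ → ℝ}
    (hp : ∀ a ∈ Ioo (0:ℝ) M, 0 < G a)
    (h₁ : Tendsto (fun a => G a / (4 * π * a)) (nhdsWithin 0 (Ioo 0 M)) (nhds 1))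
    (hw : ∀ x ∈ Icc 0 M, HasDerivAt w (dw x) x)
    (hdw : ∀ x ∈ Ioo 0 M, dw x ≤ (c ^ 2 - w x ^ 2) / G x - lam)
    (hwc : ∀ x ∈ Icc 0 M, w x ≤ c) (hwM : 0 < w M) (hg : Admissible M G g) :
    lam ≤ rayleigh M ν G g := by
  have hnum := num_integrable (ν := ν) hg
  have hden := den_pos hg
  obtain ⟨_, _, hdiff, hg2, _, hgG⟩ := hg
  unfold rayleigh
  rw [le_div_iff₀ hden]
  set num := fun a => G a * (deriv g a) ^ 2 + 4 * π ^ 2 * ν ^ 2 * (g a) ^ 2 / G a with hnumdef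
  have hnn : ∀ a ∈ Ioo (0:ℝ) M, 0 ≤ num a := by
    intro a ha
    have := hp a ha
    simp only [hnumdef]; positivity
  set N := ∫ a in Ioo (0:ℝ) M, num a with hN
  have hII : IntervalIntegrable (fun a => (g a) ^ 2) volume 0 M := by
    rw [intervalIntegrable_iff_integrableOn_Ioo_of_le hM.le]; exact hg2
  set P := fun x => ∫ a in (0:ℝ)..x, (g a) ^ 2 with hP
  have hPM : ∫ a in Ioo (0:ℝ) M, (g a) ^ 2 = P M := by
    simp only [hP]
    rw [intervalIntegral.integral_of_le hM.le, integral_Ioc_eq_integral_Ioo]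
  have hPc : ContinuousOn P (Icc 0 M) := by
    have := intervalIntegral.continuousOn_primitive_interval' hII (a := 0) left_mem_uIcc
    rwa [uIcc_of_le hM.le] at this
  rw [hPM]
  -- positivity near M
  have hev : ∀ᶠ b in nhds M, 0 < w b :=
    (hw M ⟨hM.le, le_rfl⟩).continuousAt.eventually (lt_mem_nhds hwM)
  have step : ∀ a ∈ Ioo 0 M, lam * (P M - P a) ≤ N + c * g a ^ 2 := by
    intro a ha
    have hten : Tendsto (fun b => lam * (P b - P a)) (nhdsWithin M (Ioo a M))
        (nhds (lam * (P M - P a))) := by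
      have : ContinuousWithinAt P (Ioo a M) M :=
        (hPc M ⟨hM.le, le_rfl⟩).mono (fun x hx => ⟨(ha.1.trans hx.1).le, hx.2.le⟩)
      exact (this.tendsto.sub_const _).const_mul _
    have : (nhdsWithin M (Ioo a M)).NeBot := by
      rw [← mem_closure_iff_nhdsWithin_neBot, closure_Ioo ha.2.ne]
      exact ⟨ha.2.le, le_rfl⟩
    refine le_of_tendsto hten ?_
    filter_upwards [self_mem_nhdsWithin, nhdsWithin_le_nhds hev] with b hb hwb
    have hsub : Icc a b ⊆ Ioo 0 M := fun x hx => ⟨ha.1.trans_le hx.1, hx.2.trans_lt hb.2⟩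
    have hd : ∀ x ∈ Icc a b, HasDerivAt (fun x => w x * g x ^ 2)
        (dw x * g x ^ 2 + w x * (2 * g x * deriv g x)) x := by
      intro x hx
      have h1 := (hw x (Ioo_subset_Icc_self (hsub hx))).mul
        ((hdiff x (hsub hx)).hasDerivAt.fun_pow 2)
      refine h1.congr_deriv ?_
      norm_num
    have hle := intervalIntegral.sub_le_integral_of_hasDeriv_right_of_le hb.1.le
      (fun x hx => (hd x hx).continuousAt.continuousWithinAt)
      (fun x hx => (hd x (Ioo_subset_Icc_self hx)).hasDerivWithinAt)
      (φ := fun x => num x - lam * g x ^ 2)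
      ((hnum.mono_set hsub).sub ((hg2.mono_set hsub).const_mul lam)) (by
        intro x hx
        have hx' := hsub (Ioo_subset_Icc_self hx)
        have hG := hp x hx'
        have h1 := mul_le_mul_of_nonneg_right (hdw x hx') (sq_nonneg (g x))
        have h2 : 0 ≤ (G x * deriv g x - w x * g x) ^ 2 / G x := by positivity
        have h3 : (G x * deriv g x - w x * g x) ^ 2 / G x =
          G x * deriv g x ^ 2 - w x * (2 * g x * deriv g x) + w x ^ 2 / G x * g x ^ 2 := by
          field_simp; ring
        have h4 : num x = G x * deriv g x ^ 2 + c ^ 2 / G x * g x ^ 2 := by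
          simp only [hnumdef, hcν]; ring
        have h5 : ((c ^ 2 - w x ^ 2) / G x - lam) * g x ^ 2 =
          c ^ 2 / G x * g x ^ 2 - w x ^ 2 / G x * g x ^ 2 - lam * g x ^ 2 := by ring
        rw [h4]; linarith)
    have hi1 : IntervalIntegrable num volume a b := by
      rw [intervalIntegrable_iff_integrableOn_Icc_of_le hb.1.le]; exact hnum.mono_set hsub
    have hi2 : IntervalIntegrable (fun x => g x ^ 2) volume a b := by
      rw [intervalIntegrable_iff_integrableOn_Icc_of_le hb.1.le]; exact hg2.mono_set hsub
    rw [intervalIntegral.integral_sub hi1 (hi2.const_mul lam),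
      intervalIntegral.integral_const_mul] at hle
    have hPab : ∫ x in a..b, g x ^ 2 = P b - P a := by
      simp only [hP]
      rw [intervalIntegral.integral_interval_sub_left]
      · exact hII.mono_set (by
          rw [uIcc_of_le hM.le, uIcc_of_le (ha.1.trans hb.1).le]
          exact Icc_subset_Icc_right hb.2.le)
      · exact hII.mono_set (by
          rw [uIcc_of_le hM.le, uIcc_of_le ha.1.le]
          exact Icc_subset_Icc_right ha.2.le)
    have hNab : ∫ x in a..b, num x ≤ N := by
      rw [intervalIntegral.integral_of_le hb.1.le]
      exact setIntegral_mono_set hnum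
        ((ae_restrict_iff' measurableSet_Ioo).2 (ae_of_all _ hnn))
        (Ioc_subset_Icc_self.trans hsub).eventuallyLE
    rw [hPab] at hle
    have h6 : 0 ≤ w b * g b ^ 2 := by positivity
    have h7 : w a * g a ^ 2 ≤ c * g a ^ 2 :=
      mul_le_mul_of_nonneg_right (hwc a (Ioo_subset_Icc_self ha)) (sq_nonneg _)
    linarith
  have hP0 : Tendsto P (nhdsWithin 0 (Icc 0 M)) (nhds 0) := by
    have := (hPc 0 ⟨le_rfl, hM.le⟩).tendsto
    simpa [hP] using this
  apply le_of_forall_pos_le_add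
  intro e he
  have h2 := hP0.eventually (gt_mem_nhds (show 0 < e / (2 * (lam + 1)) by positivity))
  rw [eventually_nhdsWithin_iff, Metric.eventually_nhds_iff] at h2
  obtain ⟨r, hr, h2⟩ := h2
  obtain ⟨a, ha, har, hga⟩ := small_near_zero hM hp h₁ hgG (e / (2 * c)) r (by positivity) hr
  have h3 := h2 (y := a) (by simpa [abs_of_pos ha.1] using har) (Ioo_subset_Icc_self ha)
  have h4 := step a ha
  have h5 : c * g a ^ 2 ≤ e / 2 := by
    rw [lt_div_iff₀ (by positivity)] at hga; linarith
  have h6 : lam * P a ≤ e / 2 := by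
    have h7 : lam * P a ≤ lam * (e / (2 * (lam + 1))) := mul_le_mul_of_nonneg_left h3.le hlam
    have h8 : lam * (e / (2 * (lam + 1))) ≤ e / 2 := by
      rw [mul_div_assoc', div_le_div_iff₀ (by positivity) (by positivity)]
      nlinarith
    linarith
  linarith

lemma lower_strict {M ν lam c L : ℝ} (hM : 0 < M) (hcν : c = 2 * π * ν) (hc : 0 < c)
    (hlam : 0 ≤ lam) {G w H : ℝ → ℝ}
    (hp : ∀ a ∈ Ioo (0:ℝ) M, 0 < G a)
    (h₁ : Tendsto (fun a => G a / (4 * π * a)) (nhdsWithin 0 (Ioo 0 M)) (nhds 1))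
    (hH : Continuous H) (h0 : ∀ x, 0 ≤ H x) (hL : ∀ x, H x ≤ L)
    (hHG : ∀ x ∈ Ioo 0 M, H x ≤ 1 / G x) (hw0 : w 0 = c)
    (hw : ∀ x ∈ Icc 0 M, HasDerivAt w (phiT c (w x) * H x - lam) x) (hwM : 0 < w M) :
    ∃ δ > 0, ∀ g, Admissible M G g → lam + δ ≤ rayleigh M ν G g := by
  obtain ⟨δ, hδ, w', hw0', hwM', hw'⟩ := sol_open hc hM hH h0 hL hlam hw0 hw hwM
  refine ⟨δ, hδ, fun g hg => ?_⟩
  have hle := sol_le hc (by positivity) hw0' hw'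
  have hge := sol_ge_neg hc h0 hL (by positivity) hw' hwM'
  refine lower_bound hM hcν hc (by positivity) hp h₁ hw' ?_ hle hwM' hg
  intro x hx
  have hx' := Ioo_subset_Icc_self hx
  have h2 := mul_le_mul_of_nonneg_left (hHG x hx) (phiT_nonneg c (w' x))
  rw [phiT_eq (hge x hx') (hle x hx')] at h2 ⊢
  rw [mul_one_div] at h2
  linarith

lemma exists_admissible {M : ℝ} (hM : 0 < M) {G : ℝ → ℝ} (hG : ContinuousOn G (Ioo 0 M))
    (hp : ∀ a ∈ Ioo (0:ℝ) M, 0 < G a) : ∃ f, Admissible M G f := by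
  let b : ContDiffBump (M / 2) := ⟨M / 8, M / 4, by positivity, by linarith⟩
  have hsm : ContDiff ℝ 1 (b : ℝ → ℝ) := b.contDiff
  have hsupp : tsupport (b : ℝ → ℝ) ⊆ Icc (M / 4) (3 * M / 4) := by
    rw [b.tsupport_eq, Real.closedBall_eq_Icc]
    exact Icc_subset_Icc (by simp only [b]; linarith) (by simp only [b]; linarith)
  have hIcc : Icc (M / 4) (3 * M / 4) ⊆ Ioo 0 M := fun x hx =>
    ⟨by linarith [hx.1], by linarith [hx.2]⟩
  have hz : ∀ x ∉ Icc (M / 4) (3 * M / 4), b x = 0 := fun x hx =>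
    image_eq_zero_of_notMem_tsupport fun h => hx (hsupp h)
  have hdz : ∀ x ∉ Icc (M / 4) (3 * M / 4), deriv b x = 0 := fun x hx =>
    image_eq_zero_of_notMem_tsupport fun h => hx (hsupp (tsupport_deriv_subset h))
  have hdc : Continuous (deriv (b : ℝ → ℝ)) := hsm.continuous_deriv le_rfl
  have gen : ∀ F : ℝ → ℝ, ContinuousOn F (Ioo 0 M) → (∀ x ∉ Icc (M / 4) (3 * M / 4), F x = 0) →
      IntegrableOn F (Ioo 0 M) := by
    intro F hF hF0
    have h1 : IntegrableOn F (Icc (M / 4) (3 * M / 4)) := (hF.mono hIcc).integrableOn_Icc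
    have h2 : Integrable F := by
      rw [← integrableOn_univ]
      exact h1.of_forall_sdiff_eq_zero MeasurableSet.univ (fun x hx => hF0 x hx.2)
    exact h2.integrableOn
  refine ⟨b, hsm.continuous.measurable, ?_, ?_, ?_, ?_, ?_⟩
  · intro h
    rw [ae_restrict_iff' measurableSet_Ioo, ae_iff] at h
    have h2 : Metric.ball (M / 2) (M / 8) ⊆ {a | ¬(a ∈ Ioo 0 M → b a = 0)} := by
      intro x hx
      simp only [mem_ofPred_eq, Classical.not_imp]
      refine ⟨?_, ?_⟩
      · rw [Real.ball_eq_Ioo] at hx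
        exact ⟨by linarith [hx.1], by linarith [hx.2]⟩
      · rw [b.one_of_mem_closedBall (Metric.ball_subset_closedBall hx)]
        norm_num
    have h3 := measure_mono_null h2 h
    exact (Metric.measure_ball_pos volume (M / 2) (by positivity : 0 < M / 8)).ne' h3
  · intro a _
    exact (hsm.differentiable one_ne_zero) a
  · exact gen _ (hsm.continuous.pow 2).continuousOn (fun x hx => by simp [hz x hx])
  · exact gen _ (hG.mul (hdc.pow 2).continuousOn) (fun x hx => by simp [hdz x hx])
  · exact gen _ ((hsm.continuous.pow 2).continuousOn.div hG (fun x hx => (hp x hx).ne'))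
      (fun x hx => by simp [hz x hx])

/-- bounded continuous approximation of `1 / G` -/
noncomputable def Happ (M : ℝ) (G : ℝ → ℝ) (n : ℕ) : ℝ → ℝ :=
  (Ioo 0 M).indicator fun a => min (1 / G a) (n * min a (M - a))

lemma Happ_of_mem {M : ℝ} {G : ℝ → ℝ} (n : ℕ) {a : ℝ} (ha : a ∈ Ioo 0 M) :
    Happ M G n a = min (1 / G a) (n * min a (M - a)) := indicator_of_mem ha _

lemma Happ_of_notMem {M : ℝ} {G : ℝ → ℝ} (n : ℕ) {a : ℝ} (ha : a ∉ Ioo 0 M) :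
    Happ M G n a = 0 := indicator_of_notMem ha _

lemma Happ_nonneg {M : ℝ} {G : ℝ → ℝ} (hp : ∀ a ∈ Ioo (0:ℝ) M, 0 < G a) (n : ℕ) (x : ℝ) :
    0 ≤ Happ M G n x := by
  refine indicator_nonneg (fun a ha => ?_) x
  have := hp a ha
  have h1 : 0 < min a (M - a) := lt_min ha.1 (by linarith [ha.2])
  positivity

lemma Happ_le {M : ℝ} (hM : 0 < M) {G : ℝ → ℝ} (n : ℕ) (x : ℝ) :
    Happ M G n x ≤ n * M := by
  by_cases hx : x ∈ Ioo 0 M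
  · rw [Happ_of_mem n hx]
    refine (min_le_right _ _).trans (mul_le_mul_of_nonneg_left ?_ (by positivity))
    exact (min_le_left _ _).trans hx.2.le
  · rw [Happ_of_notMem n hx]; positivity

lemma Happ_le_inv {M : ℝ} {G : ℝ → ℝ} (n : ℕ) (x : ℝ) (hx : x ∈ Ioo 0 M) :
    Happ M G n x ≤ 1 / G x := by
  rw [Happ_of_mem n hx]; exact min_le_left _ _

lemma Happ_mono {M : ℝ} {G : ℝ → ℝ} {n m : ℕ} (hnm : n ≤ m) (x : ℝ) :
    Happ M G n x ≤ Happ M G m x := by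
  by_cases hx : x ∈ Ioo 0 M
  · rw [Happ_of_mem n hx, Happ_of_mem m hx]
    have h1 : 0 < min x (M - x) := lt_min hx.1 (by linarith [hx.2])
    gcongr
  · rw [Happ_of_notMem n hx, Happ_of_notMem m hx]

lemma Happ_tendsto {M : ℝ} {G : ℝ → ℝ} {x : ℝ} (hx : x ∈ Ioo 0 M) :
    Tendsto (fun n => Happ M G n x) atTop (nhds (1 / G x)) := by
  have h1 : 0 < min x (M - x) := lt_min hx.1 (by linarith [hx.2])
  apply tendsto_const_nhds.congr'
  have h2 : Tendsto (fun n : ℕ => (n : ℝ) * min x (M - x)) atTop atTop :=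
    tendsto_natCast_atTop_atTop.atTop_mul_const h1
  filter_upwards [h2.eventually_ge_atTop (1 / G x)] with n hn
  rw [Happ_of_mem n hx, min_eq_left hn]

lemma Happ_cont {M : ℝ} {G : ℝ → ℝ} (hG : ContinuousOn G (Ioo 0 M))
    (hp : ∀ a ∈ Ioo (0:ℝ) M, 0 < G a) (n : ℕ) : Continuous (Happ M G n) := by
  rw [continuous_iff_continuousAt]
  intro x
  by_cases hx : x ∈ Ioo 0 M
  · have hnh : Ioo 0 M ∈ nhds x := Ioo_mem_nhds hx.1 hx.2
    have h1 : ContinuousAt (fun a => min (1 / G a) (n * min a (M - a))) x := by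
      have hGx : ContinuousAt G x := hG.continuousAt hnh
      have : ContinuousAt (fun a => 1 / G a) x := continuousAt_const.div hGx (hp x hx).ne'
      exact this.min (by fun_prop : ContinuousAt (fun a => (n : ℝ) * min a (M - a)) x)
    refine h1.congr ?_
    filter_upwards [hnh] with y hy
    rw [Happ_of_mem n hy]
  · unfold ContinuousAt
    rw [Happ_of_notMem n hx]
    have h2 : Tendsto (fun y => (n : ℝ) * |y - x|) (nhds x) (nhds 0) := by
      have : Continuous (fun y => (n : ℝ) * |y - x|) := by fun_prop
      simpa using this.tendsto x
    refine squeeze_zero (Happ_nonneg hp n) (fun y => ?_) h2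
    by_cases hy : y ∈ Ioo 0 M
    · rw [Happ_of_mem n hy]
      refine (min_le_right _ _).trans (mul_le_mul_of_nonneg_left ?_ (by positivity))
      rcases le_or_gt x 0 with h | h
      · exact (min_le_left _ _).trans ((by linarith : y ≤ y - x).trans (le_abs_self _))
      · have : M ≤ x := by
          by_contra hcon
          exact hx ⟨h, by linarith⟩
        refine (min_le_right _ _).trans ((by linarith : M - y ≤ -(y - x)).trans (neg_le_abs _))
    · rw [Happ_of_notMem n hy]; positivity

lemma limit_sol {M c κ : ℝ} (hM : 0 < M) (hc : 0 < c) (hκ : 0 ≤ κ) {G : ℝ → ℝ}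
    (hG : ContinuousOn G (Ioo 0 M)) (hp : ∀ a ∈ Ioo (0:ℝ) M, 0 < G a)
    (hneg : ∀ (n : ℕ) (w : ℝ → ℝ), w 0 = c →
      (∀ x ∈ Icc 0 M, HasDerivAt w (phiT c (w x) * Happ M G n x - κ) x) → w M ≤ 0) :
    ∃ w : ℝ → ℝ, (∀ x ∈ Ioo 0 M, HasDerivAt w (phiT c (w x) / G x - κ) x) ∧
      ∀ x ∈ Ioo 0 M, c - κ * x ≤ w x ∧ w x ≤ c ∧ w x ≤ κ * (M - x) := by
  choose W hW0 hW using fun n : ℕ => exists_sol hc hM (Happ_cont hG hp n) (Happ_nonneg hp n)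
    (Happ_le hM n) hκ
  have hmono : ∀ x ∈ Icc 0 M, Monotone fun n => W n x := fun x hx n m hnm =>
    sol_mono hc (Happ_nonneg hp n) (Happ_le hM n) (Happ_mono hnm) (hW0 n) (hW0 m) (hW n) (hW m) x hx
  have hle : ∀ n, ∀ x ∈ Icc 0 M, W n x ≤ c := fun n => sol_le hc hκ (hW0 n) (hW n)
  set w : ℝ → ℝ := fun x => ⨆ n, W n x with hw
  have hten : ∀ x ∈ Icc 0 M, Tendsto (fun n => W n x) atTop (nhds (w x)) := fun x hx =>
    tendsto_atTop_ciSup (hmono x hx) ⟨c, by rintro _ ⟨n, rfl⟩; exact hle n x hx⟩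
  have hbd : ∀ x ∈ Ioo 0 M, ∀ n, |phiT c (W n x) * Happ M G n x - κ| ≤ c ^ 2 / G x + κ := by
    intro x hx n
    have h1 := phiT_nonneg c (W n x)
    have h3 : phiT c (W n x) * Happ M G n x ≤ c ^ 2 * (1 / G x) :=
      mul_le_mul (phiT_le _ _) (Happ_le_inv n x hx) (Happ_nonneg hp n x) (by positivity)
    have h4 := mul_nonneg h1 (Happ_nonneg hp n x)
    rw [mul_one_div] at h3
    rw [abs_le]; constructor <;> linarith
  have hbc : ContinuousOn (fun x => c ^ 2 / G x + κ) (Ioo 0 M) :=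
    (continuousOn_const.div hG fun x hx => (hp x hx).ne').add continuousOn_const
  have hwc : ContinuousOn w (Ioo 0 M) := by
    intro x hx
    apply ContinuousAt.continuousWithinAt
    obtain ⟨p, hp1, hp2⟩ := exists_between hx.1
    obtain ⟨q, hq1, hq2⟩ := exists_between hx.2
    have hsub : Icc p q ⊆ Ioo 0 M := fun y hy => ⟨hp1.trans_le hy.1, hy.2.trans_lt hq2⟩
    obtain ⟨C, hC⟩ := isCompact_Icc.exists_bound_of_continuousOn (hbc.mono hsub)
    have hlip : ∀ y ∈ Icc p q, |w y - w x| ≤ C * |y - x| := by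
      intro y hy
      have hxpq : x ∈ Icc p q := ⟨hp2.le, hq1.le⟩
      have h1 : ∀ n, |W n y - W n x| ≤ C * |y - x| := by
        intro n
        have := (convex_Icc p q).norm_image_sub_le_of_norm_hasDerivWithin_le (f := W n)
          (fun z hz => (hW n z (Ioo_subset_Icc_self (hsub hz))).hasDerivWithinAt)
          (C := C) (fun z hz => ?_) hxpq hy
        · simpa using this
        · rw [Real.norm_eq_abs]
          exact (hbd z (hsub hz) n).trans ((le_abs_self _).trans (hC z hz))
      refine le_of_tendsto ((hten y ?_).sub (hten x ?_)).abs (Eventually.of_forall h1)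
      · exact Ioo_subset_Icc_self (hsub hy)
      · exact Ioo_subset_Icc_self hx
    have h2 : Tendsto (fun y => C * |y - x|) (nhds x) (nhds 0) := by
      have : Continuous (fun y => C * |y - x|) := by fun_prop
      simpa using this.tendsto x
    rw [ContinuousAt, tendsto_iff_norm_sub_tendsto_zero]
    refine squeeze_zero' (Eventually.of_forall fun y => norm_nonneg _) ?_ h2
    filter_upwards [Icc_mem_nhds hp2 hq1] with y hy
    exact hlip y hy
  have hFc : ContinuousOn (fun x => phiT c (w x) / G x - κ) (Ioo 0 M) :=
    (((phiT_cont c).comp_continuousOn hwc).div hG fun x hx => (hp x hx).ne').sub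
      continuousOn_const
  have hmid : M / 2 ∈ Ioo 0 M := ⟨by linarith, by linarith⟩
  have hsubx : ∀ x ∈ Ioo 0 M, uIcc (M / 2) x ⊆ Ioo 0 M := fun x hx =>
    ordConnected_Ioo.uIcc_subset hmid hx
  have hintegr : ∀ x ∈ Ioo 0 M, w x - w (M / 2) = ∫ y in (M / 2)..x, (phiT c (w y) / G y - κ) := by
    intro x hx
    have hn : ∀ n, ∫ y in (M / 2)..x, (phiT c (W n y) * Happ M G n y - κ)
        = W n x - W n (M / 2) := by
      intro n
      apply intervalIntegral.integral_eq_sub_of_hasDerivAt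
      · exact fun y hy => hW n y (Ioo_subset_Icc_self (hsubx x hx hy))
      · apply ContinuousOn.intervalIntegrable
        have h1 : ContinuousOn (W n) (uIcc (M / 2) x) := fun y hy =>
          (hW n y (Ioo_subset_Icc_self (hsubx x hx hy))).continuousAt.continuousWithinAt
        exact (((phiT_cont c).comp_continuousOn h1).mul
          (Happ_cont hG hp n).continuousOn).sub continuousOn_const
    have hlim : Tendsto (fun n => ∫ y in (M / 2)..x, (phiT c (W n y) * Happ M G n y - κ)) atTop
        (nhds (∫ y in (M / 2)..x, (phiT c (w y) / G y - κ))) := by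
      refine intervalIntegral.tendsto_integral_filter_of_dominated_convergence
        (fun x => c ^ 2 / G x + κ) ?_ ?_ ?_ ?_
      · refine Eventually.of_forall fun n => ?_
        have h1 : ContinuousOn (W n) (uIoc (M / 2) x) := fun y hy =>
          (hW n y (Ioo_subset_Icc_self (hsubx x hx (uIoc_subset_uIcc hy)))).continuousAt.continuousWithinAt
        exact ContinuousOn.aestronglyMeasurable ((((phiT_cont c).comp_continuousOn h1).mul
          (Happ_cont hG hp n).continuousOn).sub continuousOn_const) measurableSet_uIoc
      · exact Eventually.of_forall fun n => ae_of_all _ fun y hy =>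
          hbd y (hsubx x hx (uIoc_subset_uIcc hy)) n
      · exact (hbc.mono (hsubx x hx)).intervalIntegrable
      · refine ae_of_all _ fun y hy => ?_
        have hy' := hsubx x hx (uIoc_subset_uIcc hy)
        have h1 := ((phiT_cont c).tendsto _).comp (hten y (Ioo_subset_Icc_self hy'))
        have h2 := (h1.mul (Happ_tendsto (G := G) hy')).sub_const κ
        rw [mul_one_div] at h2
        exact h2
    simp only [hn] at hlim
    exact tendsto_nhds_unique ((hten x (Ioo_subset_Icc_self hx)).sub
      (hten _ (Ioo_subset_Icc_self hmid))) hlim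
  refine ⟨w, fun x hx => ?_, fun x hx => ⟨?_, ?_, ?_⟩⟩
  · have hnh : Ioo 0 M ∈ nhds x := Ioo_mem_nhds hx.1 hx.2
    have h1 := intervalIntegral.integral_hasDerivAt_right
      ((hFc.mono (hsubx x hx)).intervalIntegrable)
      (hFc.stronglyMeasurableAtFilter isOpen_Ioo x hx) (hFc.continuousAt hnh)
    refine (h1.add_const (w (M / 2))).congr_of_eventuallyEq ?_
    filter_upwards [hnh] with y hy
    rw [← hintegr y hy]; ring
  · exact ge_of_tendsto (hten x (Ioo_subset_Icc_self hx)) (Eventually.of_forall fun n =>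
      sol_ge (Happ_nonneg hp n) (hW0 n) (hW n) x (Ioo_subset_Icc_self hx))
  · exact le_of_tendsto (hten x (Ioo_subset_Icc_self hx)) (Eventually.of_forall fun n =>
      hle n x (Ioo_subset_Icc_self hx))
  · refine le_of_tendsto (hten x (Ioo_subset_Icc_self hx)) (Eventually.of_forall fun n => ?_)
    have h1 := sol_le_end (Happ_nonneg hp n) (hW n) x (Ioo_subset_Icc_self hx)
    have h2 := hneg n (W n) (hW0 n) (hW n)
    linarith

lemma level_null {M κ c₀ c : ℝ} (hκ : 0 < κ) {G w : ℝ → ℝ}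
    (hw : ∀ x ∈ Ioo 0 M, HasDerivAt w (phiT c (w x) / G x - κ) x) (h0 : phiT c c₀ = 0) :
    volume {x ∈ Ioo 0 M | w x = c₀} = 0 := by
  apply Set.Countable.measure_zero
  apply (HereditarilyLindelofSpace.isLindelof _).countable_of_isDiscrete
  rw [isDiscrete_iff_nhdsNE]
  intro x hx
  have h1 : HasDerivAt w (-κ) x := by
    have := hw x hx.1
    rw [hx.2, h0] at this
    simpa using this
  have h2 := h1.eventually_ne (c := c₀) (by linarith)
  rw [← disjoint_iff, disjoint_principal_right]
  filter_upwards [h2] with z hz hz2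
  exact hz hz2.2

lemma test_bounded {M c κ : ℝ} (hM : 0 < M) (hc : 0 < c) (hκ : 0 < κ) {G₁ G₂ w E : ℝ → ℝ}
    (hp₁ : ∀ a ∈ Ioo (0:ℝ) M, 0 < G₁ a)
    (hle : ∀ a ∈ Ioo (0:ℝ) M, G₁ a ≤ G₂ a)
    (hw : ∀ x ∈ Ioo 0 M, HasDerivAt w (phiT c (w x) / G₁ x - κ) x)
    (hb : ∀ x ∈ Ioo 0 M, c - κ * x ≤ w x ∧ w x ≤ c ∧ w x ≤ κ * (M - x))
    (hE : ∀ x ∈ Ioo 0 M, HasDerivAt E (w x / G₂ x) x) :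
    ∃ C, ∀ x ∈ Ioo 0 M, E x ≤ C := by
  have hp₂ : ∀ a ∈ Ioo (0:ℝ) M, 0 < G₂ a := fun a ha => (hp₁ a ha).trans_le (hle a ha)
  set a₁ := min (c / κ) (M / 2) with ha₁
  set b₁ := max (M - c / (2 * κ)) (M / 2) with hb₁
  have ha₁0 : 0 < a₁ := by positivity
  have hb₁M : b₁ < M := by
    apply max_lt
    · have : 0 < c / (2 * κ) := by positivity
      linarith
    · linarith
  have ha₁m : a₁ ≤ M / 2 := min_le_right _ _
  have hb₁m : M / 2 ≤ b₁ := le_max_right _ _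
  have hsub : Icc a₁ b₁ ⊆ Ioo 0 M := fun x hx => ⟨ha₁0.trans_le hx.1, hx.2.trans_lt hb₁M⟩
  obtain ⟨C, hC⟩ := isCompact_Icc.exists_bound_of_continuousOn (s := Icc a₁ b₁) (f := E)
    (fun x hx => (hE x (hsub hx)).continuousAt.continuousWithinAt)
  have hC' : ∀ x ∈ Icc a₁ b₁, E x ≤ C := fun x hx => (le_abs_self _).trans (hC x hx)
  have hC0 : 0 ≤ C := (norm_nonneg _).trans (hC a₁ ⟨le_rfl, by linarith⟩)
  have hb₁mem : b₁ ∈ Ioo 0 M := hsub ⟨by linarith, le_rfl⟩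
  refine ⟨C + 2 / (3 * c) * (c + κ * M - w b₁), fun x hx => ?_⟩
  have hwb : 0 ≤ c + κ * M - w b₁ := by
    have := (hb b₁ hb₁mem).2.1
    have : 0 < κ * M := by positivity
    linarith
  have hextra : 0 ≤ 2 / (3 * c) * (c + κ * M - w b₁) := mul_nonneg (by positivity) hwb
  rcases le_total x a₁ with hxa | hxa
  · have h1 := comp_le_zero (d := fun y => E x - E y) (a := x) (b := a₁) (K := 0)
      (fun y hy => (hE y ⟨hx.1.trans_le hy.1, by linarith [hy.2]⟩).const_sub (E x)) (by simp)
      (by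
        intro y hy _
        have hy' : y ∈ Ioo 0 M := ⟨hx.1.trans_le hy.1, by linarith [hy.2]⟩
        have h2 := (hb y hy').1
        have h3 : κ * y ≤ c := by
          have : y ≤ c / κ := hy.2.trans (min_le_left _ _)
          rw [le_div_iff₀ hκ] at this; linarith
        have h4 : 0 ≤ w y / G₂ y := div_nonneg (by linarith) (hp₂ y hy').le
        linarith) a₁ ⟨hxa, le_rfl⟩
    have := hC' a₁ ⟨le_rfl, by linarith⟩
    linarith
  rcases le_total x b₁ with hxb | hxb
  · have := hC' x ⟨hxa, hxb⟩
    linarith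
  · have hsub2 : ∀ y ∈ Icc b₁ x, y ∈ Ioo 0 M := fun y hy =>
      ⟨hb₁mem.1.trans_le hy.1, hy.2.trans_lt hx.2⟩
    have h1 := comp_le_zero (a := b₁) (b := x) (K := 0)
      (d := fun y => (E y - E b₁) - 2 / (3 * c) * ((w y + κ * y) - (w b₁ + κ * b₁)))
      (fun y hy => ((hE y (hsub2 y hy)).sub_const (E b₁)).sub
        (((((hw y (hsub2 y hy)).add ((hasDerivAt_id y).const_mul κ)).sub_const
          (w b₁ + κ * b₁))).const_mul (2 / (3 * c)))) (by simp)
      (by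
        intro y hy _
        have hy' := hsub2 y hy
        have hG1 := hp₁ y hy'
        have hG2 := hp₂ y hy'
        have hb2 := (hb y hy').2.2
        have h3 : κ * (M - y) ≤ c / 2 := by
          have : M - c / (2 * κ) ≤ y := (le_max_left _ _).trans hy.1
          have h5 : M - y ≤ c / (2 * κ) := by linarith
          rw [le_div_iff₀ (by positivity)] at h5
          linarith
        have h6 : w y / G₂ y ≤ 2 / (3 * c) * (phiT c (w y) / G₁ y) := by
          rcases le_total (w y) 0 with hneg | hpos
          · have h7 : w y / G₂ y ≤ 0 := div_nonpos_of_nonpos_of_nonneg hneg hG2.le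
            have h8 : 0 ≤ 2 / (3 * c) * (phiT c (w y) / G₁ y) :=
              mul_nonneg (by positivity) (div_nonneg (phiT_nonneg _ _) hG1.le)
            linarith
          · have h7 : w y / G₂ y ≤ w y / G₁ y := div_le_div_of_nonneg_left hpos hG1 (hle y hy')
            refine h7.trans ?_
            rw [← mul_div_assoc]
            apply div_le_div_of_nonneg_right _ hG1.le
            have h8 := phiT_ge c (w y)
            rw [div_mul_eq_mul_div, le_div_iff₀ (by positivity)]
            nlinarith
        linarith) x ⟨hxb, le_rfl⟩
    have h2 := hC' b₁ ⟨by linarith, le_rfl⟩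
    have h3 : 2 / (3 * c) * ((w x + κ * x) - (w b₁ + κ * b₁)) ≤
        2 / (3 * c) * (c + κ * M - w b₁) := by
      apply mul_le_mul_of_nonneg_left _ (by positivity)
      have h4 := (hb x hx).2.1
      have h5 : κ * x ≤ κ * M := mul_le_mul_of_nonneg_left hx.2.le hκ.le
      have h6 : 0 ≤ κ * b₁ := mul_nonneg hκ.le hb₁mem.1.le
      linarith
    linarith

lemma test_fun {M ν c κ : ℝ} (hM : 0 < M) (hcν : c = 2 * π * ν) (hc : 0 < c) (hκ : 0 < κ)
    {G₁ G₂ w : ℝ → ℝ}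
    (hG₁ : ContinuousOn G₁ (Ioo 0 M)) (hG₂ : ContinuousOn G₂ (Ioo 0 M))
    (hp₁ : ∀ a ∈ Ioo (0:ℝ) M, 0 < G₁ a) (hp₂ : ∀ a ∈ Ioo (0:ℝ) M, 0 < G₂ a)
    (hle : ∀ a ∈ Ioo (0:ℝ) M, G₁ a ≤ G₂ a)
    (hw : ∀ x ∈ Ioo 0 M, HasDerivAt w (phiT c (w x) / G₁ x - κ) x)
    (hb : ∀ x ∈ Ioo 0 M, c - κ * x ≤ w x ∧ w x ≤ c ∧ w x ≤ κ * (M - x)) :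
    ∃ f, Admissible M G₂ f ∧ rayleigh M ν G₂ f ≤ κ ∧
      (0 < volume {a ∈ Ioo (0:ℝ) M | G₁ a < G₂ a} → rayleigh M ν G₂ f < κ) := by
  have hwc : ContinuousOn w (Ioo 0 M) := fun x hx => (hw x hx).continuousAt.continuousWithinAt
  have hmid : M / 2 ∈ Ioo 0 M := ⟨by linarith, by linarith⟩
  have hqc : ContinuousOn (fun x => w x / G₂ x) (Ioo 0 M) := hwc.div hG₂ fun x hx => (hp₂ x hx).ne'
  set E := fun x => ∫ y in (M / 2)..x, w y / G₂ y with hEdef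
  have hE : ∀ x ∈ Ioo 0 M, HasDerivAt E (w x / G₂ x) x := fun x hx =>
    intervalIntegral.integral_hasDerivAt_right
      ((hqc.mono (ordConnected_Ioo.uIcc_subset hmid hx)).intervalIntegrable)
      (hqc.stronglyMeasurableAtFilter isOpen_Ioo x hx)
      (hqc.continuousAt (Ioo_mem_nhds hx.1 hx.2))
  obtain ⟨C, hC⟩ := test_bounded hM hc hκ hp₁ hle hw hb hE
  classical
  set f : ℝ → ℝ := (Ioo 0 M).piecewise (fun x => exp (E x)) (fun _ => 0) with hf
  have hfe : ∀ x ∈ Ioo 0 M, f x = exp (E x) := fun x hx => piecewise_eq_of_mem _ _ _ hx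
  have hfpos : ∀ x ∈ Ioo 0 M, 0 < f x := fun x hx => by rw [hfe x hx]; positivity
  have hfd : ∀ x ∈ Ioo 0 M, HasDerivAt f (w x / G₂ x * f x) x := by
    intro x hx
    have h1 := (hE x hx).exp
    rw [← hfe x hx, mul_comm] at h1
    refine h1.congr_of_eventuallyEq ?_
    filter_upwards [Ioo_mem_nhds hx.1 hx.2] with y hy using hfe y hy
  have hEc : ContinuousOn E (Ioo 0 M) := fun x hx => (hE x hx).continuousAt.continuousWithinAt
  have hfc : ContinuousOn f (Ioo 0 M) := fun x hx => (hfd x hx).continuousAt.continuousWithinAt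
  have hfmeas : Measurable f :=
    ContinuousOn.measurable_piecewise (continuous_exp.comp_continuousOn hEc) continuousOn_const
      measurableSet_Ioo
  set B := exp C ^ 2 with hB
  have hB0 : 0 < B := by positivity
  have hfB : ∀ x ∈ Ioo 0 M, f x ^ 2 ≤ B := fun x hx => by
    rw [hfe x hx, hB]
    have := exp_le_exp.2 (hC x hx)
    gcongr
  have hf2 : IntegrableOn (fun x => f x ^ 2) (Ioo 0 M) := by
    refine Measure.integrableOn_of_bounded (M := B) (by simp)
      (hfmeas.pow_const 2).aestronglyMeasurable ?_
    refine (ae_restrict_iff' measurableSet_Ioo).2 (ae_of_all _ fun x hx => ?_)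
    rw [Real.norm_eq_abs, abs_of_nonneg (sq_nonneg _)]
    exact hfB x hx
  set N := fun x => f x ^ 2 * (phiT c (w x) / G₁ x + 2 * w x ^ 2 / G₂ x) with hN
  set num := fun x => f x ^ 2 * ((c ^ 2 + w x ^ 2) / G₂ x) with hnum
  set D := ∫ x in Ioo (0:ℝ) M, f x ^ 2 with hD
  have hNc : ContinuousOn N (Ioo 0 M) :=
    (hfc.pow 2).mul ((((phiT_cont c).comp_continuousOn hwc).div hG₁ fun x hx => (hp₁ x hx).ne').add
      ((continuousOn_const.mul (hwc.pow 2)).div hG₂ fun x hx => (hp₂ x hx).ne'))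
  have hnumc : ContinuousOn num (Ioo 0 M) :=
    (hfc.pow 2).mul ((continuousOn_const.add (hwc.pow 2)).div hG₂ fun x hx => (hp₂ x hx).ne')
  have hnum0 : ∀ x ∈ Ioo 0 M, 0 ≤ num x := fun x hx => by
    have := hp₂ x hx
    simp only [hnum]; positivity
  have hsplit : ∀ x, (c ^ 2 + w x ^ 2) / G₂ x = (c ^ 2 - w x ^ 2) / G₂ x + 2 * w x ^ 2 / G₂ x :=
    fun x => by ring
  have hnumN : ∀ x ∈ Ioo 0 M, num x ≤ N x := by
    intro x hx
    simp only [hnum, hN]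
    apply mul_le_mul_of_nonneg_left _ (sq_nonneg _)
    rw [hsplit]
    have h1 : (c ^ 2 - w x ^ 2) / G₂ x ≤ phiT c (w x) / G₂ x :=
      div_le_div_of_nonneg_right (phiT_ge _ _) (hp₂ x hx).le
    have h2 : phiT c (w x) / G₂ x ≤ phiT c (w x) / G₁ x :=
      div_le_div_of_nonneg_left (phiT_nonneg _ _) (hp₁ x hx) (hle x hx)
    linarith
  have hN0 : ∀ x ∈ Ioo 0 M, 0 ≤ N x := fun x hx => (hnum0 x hx).trans (hnumN x hx)
  -- integral over compact pieces
  have hpiece : ∀ a b, 0 < a → a ≤ b → b < M → κ * a ≤ c →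
      ∫ x in Icc a b, N x ≤ κ * (M - b) * B + κ * D := by
    intro a b ha hab hbM hac
    have hsub : Icc a b ⊆ Ioo 0 M := fun x hx => ⟨ha.trans_le hx.1, hx.2.trans_lt hbM⟩
    have hd : ∀ x ∈ Icc a b, HasDerivAt (fun x => w x * f x ^ 2) (N x - κ * f x ^ 2) x := by
      intro x hx
      have h1 := (hw x (hsub hx)).mul ((hfd x (hsub hx)).fun_pow 2)
      refine h1.congr_deriv ?_
      simp only [hN]
      push_cast
      ring
    have hNi : IntegrableOn N (Icc a b) := (hNc.mono hsub).integrableOn_Icc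
    have hfi : IntegrableOn (fun x => κ * f x ^ 2) (Icc a b) :=
      Integrable.const_mul (hf2.mono_set hsub) κ
    have h2 := intervalIntegral.integral_le_sub_of_hasDeriv_right_of_le hab
      (fun x hx => (hd x hx).continuousAt.continuousWithinAt)
      (fun x hx => (hd x (Ioo_subset_Icc_self hx)).hasDerivWithinAt)
      (hNi.sub hfi) (fun x _ => le_rfl)
    rw [intervalIntegral.integral_of_le hab, ← integral_Icc_eq_integral_Ioc] at h2
    have h3 : ∫ x in Icc a b, (N - fun x => κ * f x ^ 2) x
        = (∫ x in Icc a b, N x) - ∫ x in Icc a b, κ * f x ^ 2 := integral_sub hNi hfi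
    rw [h3, integral_const_mul] at h2
    have h4 : ∫ x in Icc a b, f x ^ 2 ≤ D :=
      setIntegral_mono_set hf2 (ae_of_all _ fun x => sq_nonneg _) hsub.eventuallyLE
    have h5 := mul_le_mul_of_nonneg_left h4 hκ.le
    have ham := hsub ⟨le_rfl, hab⟩
    have hbm := hsub ⟨hab, le_rfl⟩
    have h6 : 0 ≤ w a * f a ^ 2 := mul_nonneg (by linarith [(hb a ham).1]) (sq_nonneg _)
    have h7 : w b * f b ^ 2 ≤ κ * (M - b) * B := by
      refine (mul_le_mul_of_nonneg_right (hb b hbm).2.2 (sq_nonneg _)).trans ?_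
      exact mul_le_mul_of_nonneg_left (hfB b hbm) (mul_nonneg hκ.le (by linarith))
    linarith
  -- exhaustion
  set ε : ℕ → ℝ := fun i => M / (i + 2) with hε
  have hε0 : ∀ i, 0 < ε i := fun i => by simp only [hε]; positivity
  have hε2 : ∀ i, ε i ≤ M / 2 := fun i => by
    simp only [hε]
    apply div_le_div_of_nonneg_left hM.le (by norm_num)
    have : (0:ℝ) ≤ i := by positivity
    linarith
  have hεt : Tendsto ε atTop (nhds 0) := by
    have h1 : Tendsto (fun i : ℕ => (i:ℝ) + 2) atTop atTop :=
      tendsto_atTop_add_const_right _ _ tendsto_natCast_atTop_atTop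
    exact tendsto_const_nhds.div_atTop h1
  have hεt2 : Tendsto (fun i => M - ε i) atTop (nhds M) := by
    simpa using hεt.const_sub M
  have hcov : AECover (volume.restrict (Ioo 0 M)) atTop fun i => Icc (ε i) (M - ε i) :=
    aecover_Ioo_of_Icc hεt hεt2
  have hsubi : ∀ i, Icc (ε i) (M - ε i) ⊆ Ioo 0 M := fun i x hx =>
    ⟨(hε0 i).trans_le hx.1, by linarith [hx.2, hε0 i]⟩
  have hrr : ∀ i, (volume.restrict (Ioo 0 M)).restrict (Icc (ε i) (M - ε i)) =
      volume.restrict (Icc (ε i) (M - ε i)) := fun i =>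
    Measure.restrict_restrict_of_subset (hsubi i)
  have hevε : ∀ᶠ i in atTop, κ * ε i ≤ c := by
    filter_upwards [hεt.eventually (gt_mem_nhds (show 0 < c / κ by positivity))] with i hi
    rw [lt_div_iff₀ hκ] at hi; linarith
  have hbnd : ∀ᶠ i in atTop, ∫ x in Icc (ε i) (M - ε i), N x ∂(volume.restrict (Ioo 0 M))
      ≤ κ * ε i * B + κ * D := by
    filter_upwards [hevε] with i hi
    rw [hrr]
    have := hpiece (ε i) (M - ε i) (hε0 i) (by linarith [hε2 i]) (by linarith [hε0 i]) hi
    simpa using this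
  have hNint : IntegrableOn N (Ioo 0 M) := by
    refine hcov.integrable_of_integral_bounded_of_nonneg_ae (κ * M * B + κ * D) ?_ ?_ ?_
    · intro i
      rw [IntegrableOn, hrr]
      exact (hNc.mono (hsubi i)).integrableOn_Icc
    · exact (ae_restrict_iff' measurableSet_Ioo).2 (ae_of_all _ hN0)
    · filter_upwards [hbnd] with i hi
      refine hi.trans ?_
      have : ε i ≤ M := by linarith [hε2 i]
      gcongr
  have hNle : ∫ x in Ioo 0 M, N x ≤ κ * D := by
    refine le_of_tendsto_of_tendsto (hcov.integral_tendsto_of_countably_generated hNint)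
      ?_ hbnd
    have : Tendsto (fun i => κ * ε i * B + κ * D) atTop (nhds (κ * 0 * B + κ * D)) :=
      ((hεt.const_mul κ).mul_const B).add_const _
    simpa using this
  have hmono : ∀ F : ℝ → ℝ, ContinuousOn F (Ioo 0 M) → (∀ x ∈ Ioo 0 M, 0 ≤ F x) →
      (∀ x ∈ Ioo 0 M, F x ≤ num x) → IntegrableOn F (Ioo 0 M) := by
    intro F hF hF0 hFn
    refine Integrable.mono' hNint (hF.aestronglyMeasurable measurableSet_Ioo) ?_
    refine (ae_restrict_iff' measurableSet_Ioo).2 (ae_of_all _ fun x hx => ?_)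
    rw [Real.norm_eq_abs, abs_of_nonneg (hF0 x hx)]
    exact (hFn x hx).trans (hnumN x hx)
  have hnumint := hmono num hnumc hnum0 (fun x _ => le_rfl)
  have e1 : ∀ x ∈ Ioo 0 M, G₂ x * deriv f x ^ 2 = f x ^ 2 * (w x ^ 2 / G₂ x) := by
    intro x hx
    have := hp₂ x hx
    rw [(hfd x hx).deriv]
    field_simp
  have i1 : IntegrableOn (fun x => f x ^ 2 * (w x ^ 2 / G₂ x)) (Ioo 0 M) := by
    refine hmono _ ((hfc.pow 2).mul ((hwc.pow 2).div hG₂ fun x hx => (hp₂ x hx).ne')) ?_ ?_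
    · intro x hx
      have := hp₂ x hx
      positivity
    · intro x hx
      have := hp₂ x hx
      simp only [hnum]
      gcongr
      linarith [sq_nonneg c]
  have i2 : IntegrableOn (fun x => c ^ 2 * (f x ^ 2 / G₂ x)) (Ioo 0 M) := by
    refine hmono _ (continuousOn_const.mul ((hfc.pow 2).div hG₂ fun x hx => (hp₂ x hx).ne')) ?_ ?_
    · intro x hx
      have := hp₂ x hx
      positivity
    · intro x hx
      have := hp₂ x hx
      have h1 : 0 ≤ f x ^ 2 * (w x ^ 2 / G₂ x) := by positivity
      have h2 : num x = c ^ 2 * (f x ^ 2 / G₂ x) + f x ^ 2 * (w x ^ 2 / G₂ x) := by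
        simp only [hnum]; ring
      linarith
  have hadm : Admissible M G₂ f := by
    refine ⟨hfmeas, ?_, fun x hx => (hfd x hx).differentiableAt, hf2, ?_, ?_⟩
    · intro h
      rw [ae_restrict_iff' measurableSet_Ioo, ae_iff] at h
      have h2 : Ioo 0 M ⊆ {a | ¬(a ∈ Ioo 0 M → f a = 0)} := fun x hx h3 => (hfpos x hx).ne' (h3 hx)
      have h3 := measure_mono_null h2 h
      simp at h3
      linarith
    · exact i1.congr_fun (fun x hx => (e1 x hx).symm) measurableSet_Ioo
    · have h1 : IntegrableOn (fun x => (c ^ 2)⁻¹ * (c ^ 2 * (f x ^ 2 / G₂ x))) (Ioo 0 M) :=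
        Integrable.const_mul i2 _
      refine h1.congr_fun (fun x hx => ?_) measurableSet_Ioo
      field_simp
  have hDpos : 0 < D := den_pos hadm
  have hray : rayleigh M ν G₂ f = (∫ x in Ioo (0:ℝ) M, num x) / D := by
    unfold rayleigh
    congr 1
    refine setIntegral_congr_fun measurableSet_Ioo fun x hx => ?_
    have h1 := e1 x hx
    simp only [h1, hnum, hcν]
    ring
  have hnle : ∫ x in Ioo 0 M, num x ≤ ∫ x in Ioo 0 M, N x :=
    setIntegral_mono_on hnumint hNint measurableSet_Ioo hnumN
  refine ⟨f, hadm, ?_, ?_⟩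
  · rw [hray, div_le_iff₀ hDpos]; linarith
  · intro hpos
    rw [hray, div_lt_iff₀ hDpos]
    have hlt : 0 < ∫ x in Ioo 0 M, (N x - num x) := by
      rw [integral_pos_iff_support_of_nonneg_ae ((ae_restrict_iff' measurableSet_Ioo).2
        (ae_of_all _ fun x hx => sub_nonneg.2 (hnumN x hx))) (hNint.sub hnumint)]
      have z1 := level_null (c₀ := c) hκ hw (phiT_self c)
      have z2 := level_null (c₀ := -c) hκ hw (phiT_zero hc (Or.inl le_rfl))
      by_contra hcon
      have hz := le_antisymm (not_lt.1 hcon) bot_le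
      have hz' := hz
      rw [Measure.restrict_apply' measurableSet_Ioo] at hz'
      refine hpos.ne' (measure_mono_null ?_ (measure_union_null hz' (measure_union_null z1 z2)))
      rintro x ⟨hx, hG⟩
      by_cases hw1 : w x = c
      · exact Or.inr (Or.inl ⟨hx, hw1⟩)
      by_cases hw2 : w x = -c
      · exact Or.inr (Or.inr ⟨hx, hw2⟩)
      refine Or.inl ⟨?_, hx⟩
      have hG1 := hp₁ x hx
      have hG2 := hp₂ x hx
      have hwc : w x < c := lt_of_le_of_ne (hb x hx).2.1 hw1
      have key : (c ^ 2 - w x ^ 2) / G₂ x < phiT c (w x) / G₁ x := by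
        rcases lt_or_gt_of_ne hw2 with h | h
        · have h1 : (c ^ 2 - w x ^ 2) / G₂ x < 0 := div_neg_of_neg_of_pos (by nlinarith) hG2
          have h2 : 0 ≤ phiT c (w x) / G₁ x := div_nonneg (phiT_nonneg _ _) hG1.le
          linarith
        · rw [phiT_eq h.le hwc.le]
          exact div_lt_div_of_pos_left (by nlinarith) hG1 hG
      have h3 : num x < N x := by
        simp only [hnum, hN]
        apply mul_lt_mul_of_pos_left _ (pow_pos (hfpos x hx) 2)
        rw [hsplit]; linarith
      exact (sub_pos.2 h3).ne'
    rw [integral_sub hNint hnumint] at hlt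
    linarith

/-- Monotonicity of the first eigenvalue `κ₁` of the one-dimensional reduced problem
with respect to the weight function `G` (case of a surface with boundary: singular
behavior `G(a) ~ 4πa` only at `a = 0`). -/
theorem kappa1_antitone_in_weight (M ν : ℝ) (hM : 0 < M) (hν : ν ∈ Ioc (0:ℝ) (1/2))
    (G₁ G₂ : ℝ → ℝ)
    (hs₁ : ContDiffOn ℝ (⊤ : ℕ∞) G₁ (Ioo 0 M)) (hs₂ : ContDiffOn ℝ (⊤ : ℕ∞) G₂ (Ioo 0 M))
    (hp₁ : ∀ a ∈ Ioo (0:ℝ) M, 0 < G₁ a) (hp₂ : ∀ a ∈ Ioo (0:ℝ) M, 0 < G₂ a)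
    (hle : ∀ a ∈ Ioo (0:ℝ) M, G₁ a ≤ G₂ a)
    (h₁ : Tendsto (fun a => G₁ a / (4 * π * a)) (nhdsWithin 0 (Ioo 0 M)) (nhds 1))
    (h₂ : Tendsto (fun a => G₂ a / (4 * π * a)) (nhdsWithin 0 (Ioo 0 M)) (nhds 1)) :
    kappa1 M ν G₂ ≤ kappa1 M ν G₁ ∧
      (0 < volume {a ∈ Ioo (0:ℝ) M | G₁ a < G₂ a} →
        kappa1 M ν G₂ < kappa1 M ν G₁) := by
  obtain ⟨hν0, _⟩ := hν
  set c := 2 * π * ν with hcν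
  have hc : 0 < c := by positivity
  have hG₁ := hs₁.continuousOn
  have hG₂ := hs₂.continuousOn
  have hne : {q | ∃ f : ℝ → ℝ, Admissible M G₁ f ∧ q = rayleigh M ν G₁ f}.Nonempty := by
    obtain ⟨f, hf⟩ := exists_admissible hM hG₁ hp₁
    exact ⟨_, f, hf, rfl⟩
  set κ := kappa1 M ν G₁ with hκdef
  have hlow : ∀ q, (∀ g, Admissible M G₁ g → q ≤ rayleigh M ν G₁ g) → q ≤ κ := by
    intro q hq
    refine le_csInf hne ?_
    rintro _ ⟨g, hg, rfl⟩
    exact hq g hg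
  have hκ : 0 < κ := by
    obtain ⟨δ, hδ, h⟩ := lower_strict (lam := 0) (w := fun _ => c) hM hcν hc le_rfl hp₁ h₁
      (Happ_cont hG₁ hp₁ 0) (Happ_nonneg hp₁ 0) (Happ_le hM 0) (Happ_le_inv 0) rfl
      (fun x _ => by simpa [phiT_self] using hasDerivAt_const x c) hc
    have := hlow _ h
    linarith
  obtain ⟨w, hw, hb⟩ := limit_sol hM hc hκ.le hG₁ hp₁ (by
    intro n w hw0 hw
    by_contra hcon
    push Not at hcon
    obtain ⟨δ, hδ, h⟩ := lower_strict hM hcν hc hκ.le hp₁ h₁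
      (Happ_cont hG₁ hp₁ n) (Happ_nonneg hp₁ n) (Happ_le hM n) (Happ_le_inv n) hw0 hw hcon
    have := hlow _ h
    linarith)
  obtain ⟨f, hf, hfle, hflt⟩ := test_fun hM hcν hc hκ hG₁ hG₂ hp₁ hp₂ hle hw hb
  have hbdd : BddBelow {q | ∃ f : ℝ → ℝ, Admissible M G₂ f ∧ q = rayleigh M ν G₂ f} := by
    refine ⟨0, ?_⟩
    rintro _ ⟨g, hg, rfl⟩
    refine div_nonneg (setIntegral_nonneg measurableSet_Ioo fun x hx => ?_)
      (integral_nonneg fun x => sq_nonneg _)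
    have := hp₂ x hx
    positivity
  have h2 : kappa1 M ν G₂ ≤ rayleigh M ν G₂ f := csInf_le hbdd ⟨f, hf, rfl⟩
  exact ⟨h2.trans hfle, fun h => h2.trans_lt (hflt h)⟩
end

section
/- Let M > 0 and ν ∈ (0, 1/2]. Let G₁, G₂ : (0,M) → ℝ be smooth positive functions with G₁(a) ≤ G₂(a) for all a ∈ (0,M), and suppose both satisfy lim_{a→0⁺} Gᵢ(a)/(4πa) = 1 and lim_{a→M⁻} Gᵢ(a)/(4π(M−a)) = 1. Then κ₁(G₂) ≤ κ₁(G₁). If moreover G₁ < G₂ on a set of positive Lebesgue measure, then κ₁(G₂) < κ₁(G₁). -/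
open MeasureTheory Real Set Filter

/-- Projection on `[-c, c]`. -/
noncomputable def clampK (c x : ℝ) : ℝ := max (-c) (min x c)

lemma clampK_abs {c : ℝ} (hc : 0 < c) (x : ℝ) : |clampK c x| ≤ c := by
  rw [abs_le]; unfold clampK
  exact ⟨le_max_left _ _, max_le (by linarith) (min_le_right _ _)⟩

lemma clampK_sq_le {c : ℝ} (hc : 0 < c) (x : ℝ) : clampK c x ^ 2 ≤ c ^ 2 :=
  sq_le_sq' (abs_le.1 (clampK_abs hc x)).1 (abs_le.1 (clampK_abs hc x)).2

lemma clampK_lip (c x y : ℝ) : |clampK c x - clampK c y| ≤ |x - y| := by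
  unfold clampK
  refine (abs_max_sub_max_le_max _ _ _ _).trans ?_
  refine max_le (by simp) ?_
  refine (abs_min_sub_min_le_max _ _ _ _).trans ?_
  exact max_le le_rfl (by simp)

lemma clampK_of_mem {c x : ℝ} (h : |x| ≤ c) : clampK c x = x := by
  rw [abs_le] at h; unfold clampK
  rw [min_eq_left h.2, max_eq_right h.1]

lemma clampK_sq_of_ge {c x : ℝ} (hc : 0 < c) (h : c ≤ x) : clampK c x ^ 2 = c ^ 2 := by
  unfold clampK
  rw [min_eq_right h, max_eq_right (by linarith)]

lemma clampK_sq_of_le {c x : ℝ} (hc : 0 < c) (h : x ≤ -c) : clampK c x ^ 2 = c ^ 2 := by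
  unfold clampK
  rw [min_eq_left (by linarith), max_eq_left h]; ring

lemma clampK_sq_lip {c : ℝ} (hc : 0 < c) (x y : ℝ) :
    |clampK c x ^ 2 - clampK c y ^ 2| ≤ 2 * c * |x - y| := by
  have : clampK c x ^ 2 - clampK c y ^ 2
      = (clampK c x + clampK c y) * (clampK c x - clampK c y) := by ring
  rw [this, abs_mul]
  have h1 : |clampK c x + clampK c y| ≤ 2 * c :=
    (abs_add_le _ _).trans (by linarith [clampK_abs hc x, clampK_abs hc y])
  exact mul_le_mul h1 (clampK_lip c x y) (abs_nonneg _) (by linarith)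

/-- truncated Riccati vector field -/
noncomputable def ricF (c : ℝ) (h : ℝ → ℝ) (κ t x : ℝ) : ℝ := (c ^ 2 - clampK c x ^ 2) * h t - κ

lemma ricF_lip {c B : ℝ} (hc : 0 < c) {h : ℝ → ℝ} {κ t : ℝ} (h0 : 0 ≤ h t) (hB : h t ≤ B) :
    LipschitzWith (2 * c * B).toNNReal (ricF c h κ t) := by
  refine LipschitzWith.of_dist_le_mul fun x y => ?_
  have hB0 : 0 ≤ 2 * c * B := by have := h0.trans hB; positivity
  rw [Real.coe_toNNReal _ hB0, Real.dist_eq, Real.dist_eq]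
  have : ricF c h κ t x - ricF c h κ t y = -(clampK c x ^ 2 - clampK c y ^ 2) * h t := by
    unfold ricF; ring
  rw [this, abs_mul, abs_neg, abs_of_nonneg h0]
  calc _ ≤ (2 * c * |x - y|) * B :=
        mul_le_mul (clampK_sq_lip hc x y) hB h0 (by positivity)
    _ = _ := by ring

lemma ric_exists {c p q B : ℝ} (hc : 0 < c) (hpq : p ≤ q) {h : ℝ → ℝ}
    (hcont : ContinuousOn h (Icc p q)) (h0 : ∀ t ∈ Icc p q, 0 ≤ h t)
    (hB : ∀ t ∈ Icc p q, h t ≤ B) (κ : ℝ) :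
    ∃ w : ℝ → ℝ, w p = c ∧
      ∀ t ∈ Icc p q, HasDerivWithinAt w (ricF c h κ t (w t)) (Icc p q) t := by
  have hB0 : 0 ≤ B := (h0 p ⟨le_rfl, hpq⟩).trans (hB p ⟨le_rfl, hpq⟩)
  have hL : 0 ≤ c ^ 2 * B + |κ| := by positivity
  have hPL : IsPicardLindelof (ricF c h κ) (⟨p, le_rfl, hpq⟩ : Icc p q) c
      ((c ^ 2 * B + |κ|) * (q - p)).toNNReal 0 (c ^ 2 * B + |κ|).toNNReal (2 * c * B).toNNReal := by
    refine ⟨fun t ht => (ricF_lip hc (h0 t ht) (hB t ht)).lipschitzOnWith, fun x _ => ?_,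
      fun t ht x _ => ?_, ?_⟩
    · unfold ricF
      exact (continuousOn_const.mul hcont).sub continuousOn_const
    · rw [Real.coe_toNNReal _ hL, Real.norm_eq_abs]
      unfold ricF
      have h1 := clampK_sq_le hc x
      refine (abs_sub _ _).trans ?_
      have : |(c ^ 2 - clampK c x ^ 2) * h t| ≤ c ^ 2 * B := by
        rw [abs_of_nonneg (mul_nonneg (by linarith) (h0 t ht))]
        exact mul_le_mul (by nlinarith [sq_nonneg (clampK c x)]) (hB t ht) (h0 t ht) (by positivity)
      linarith
    · rw [Real.coe_toNNReal _ hL, Real.coe_toNNReal _ (mul_nonneg hL (by linarith))]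
      simp [max_eq_left (sub_nonneg.2 hpq)]
  exact hPL.exists_eq_forall_mem_Icc_hasDerivWithinAt₀

lemma hasDerivWithinAt_Ici_of_Icc {w : ℝ → ℝ} {d p q t : ℝ} (ht : t ∈ Ico p q)
    (h : HasDerivWithinAt w d (Icc p q) t) : HasDerivWithinAt w d (Ici t) t := by
  have : HasDerivWithinAt w d (Icc t q) t := h.mono (Icc_subset_Icc_left ht.1)
  exact this.mono_of_mem_nhdsWithin (Icc_mem_nhdsGE ht.2)

/-- Shooting: the truncated problem on a compact interval. -/
lemma shoot {c p q m₁ m₂ B : ℝ} (hc : 0 < c) (hp : p ≤ m₁) (hm : m₁ < m₂) (hq : m₂ ≤ q) {h : ℝ → ℝ}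
    (hcont : ContinuousOn h (Icc p q)) (h0 : ∀ t ∈ Icc p q, 0 ≤ h t)
    (hB : ∀ t ∈ Icc m₁ m₂, h t ≤ B) :
    ∃ κ ∈ Icc (0:ℝ) (c ^ 2 * B + 2 * c / (m₂ - m₁)), ∃ w : ℝ → ℝ, w p = c ∧ w q = -c ∧
      ∀ t ∈ Icc p q, |w t| ≤ c ∧ c - κ * (t - p) ≤ w t ∧ w t ≤ -c + κ * (q - t) ∧
        HasDerivWithinAt w ((c ^ 2 - w t ^ 2) * h t - κ) (Icc p q) t := by
  set K := c ^ 2 * B + 2 * c / (m₂ - m₁) with hK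
  have hB0 : 0 ≤ B := (h0 m₁ ⟨hp, by linarith⟩).trans (hB m₁ ⟨le_rfl, hm.le⟩)
  have hm' : 0 < m₂ - m₁ := sub_pos.2 hm
  have hK0 : 0 < K := by positivity
  have hpq : p < q := by linarith
  obtain ⟨B', hB'⟩ : ∃ B', ∀ t ∈ Icc p q, h t ≤ B' := by
    obtain ⟨B', hB'⟩ := (isCompact_Icc.image_of_continuousOn hcont).bddAbove
    exact ⟨B', fun t ht => hB' (mem_image_of_mem _ ht)⟩
  set B1 := max B' 1
  have hB1 : ∀ t ∈ Icc p q, h t ≤ B1 := fun t ht => (hB' t ht).trans (le_max_left _ _)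
  have hB1p : 0 < B1 := lt_of_lt_of_le one_pos (le_max_right _ _)
  choose W hWp hW using ric_exists hc hpq.le hcont h0 hB1
  have hWc : ∀ κ, ContinuousOn (W κ) (Icc p q) := fun κ t ht => (hW κ t ht).continuousWithinAt
  have hWr : ∀ κ, ∀ t ∈ Ico p q, HasDerivWithinAt (W κ) (ricF c h κ t (W κ t)) (Ici t) t :=
    fun κ t ht => hasDerivWithinAt_Ici_of_Icc ht (hW κ t ⟨ht.1, ht.2.le⟩)
  -- barrier
  have barrier : ∀ κ, 0 < κ → ∀ s ∈ Icc p q, ∀ y, c ^ 2 = clampK c y ^ 2 → W κ s ≤ y →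
      ∀ t ∈ Icc s q, W κ t ≤ y := by
    intro κ hκ s hs y hy hsy t ht
    refine image_le_of_deriv_right_lt_deriv_boundary (f := W κ) (B := fun _ => y) (B' := fun _ => 0)
      ((hWc κ).mono (Icc_subset_Icc_left hs.1)) (fun x hx => hWr κ x ⟨hs.1.trans hx.1, hx.2⟩) hsy
      (fun x => hasDerivAt_const x y) (fun x hx hxy => ?_) ht
    rw [hxy]; unfold ricF; rw [hy]; simpa using hκ
  -- continuity in κ
  have hLip : Continuous fun κ => W κ q := by
    set k := 2 * c * B1
    have hk : 0 < k := by positivity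
    set C := (exp (k * (q - p)) - 1) / k
    have hC : 0 ≤ C := div_nonneg (by
      have : 0 ≤ k * (q - p) := mul_nonneg hk.le (by linarith)
      linarith [Real.add_one_le_exp (k * (q - p))]) hk.le
    refine (LipschitzWith.of_dist_le_mul (K := C.toNNReal) fun κ₁ κ₂ => ?_).continuous
    have := dist_le_of_approx_trajectories_ODE_of_mem (v := ricF c h κ₁) (K := k.toNNReal)
      (s := fun _ => univ) (f := W κ₁) (g := W κ₂) (a := p) (b := q) (δ := 0) (εf := 0)
      (εg := |κ₁ - κ₂|)
      (f' := fun t => ricF c h κ₁ t (W κ₁ t)) (g' := fun t => ricF c h κ₂ t (W κ₂ t))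
      (fun t ht => (ricF_lip hc (h0 t ⟨ht.1, ht.2.le⟩) (hB1 t ⟨ht.1, ht.2.le⟩)).lipschitzOnWith)
      (hWc κ₁) (hWr κ₁) (fun t ht => by simp) (fun _ _ => mem_univ _)
      (hWc κ₂) (hWr κ₂) (fun t ht => by
        rw [Real.dist_eq]; unfold ricF; apply le_of_eq; congr 1; ring) (fun _ _ => mem_univ _)
      (by rw [hWp, hWp]; simp) q ⟨hpq.le, le_rfl⟩
    rw [Real.coe_toNNReal _ hk.le, gronwallBound_of_K_ne_0 hk.ne'] at this
    rw [Real.coe_toNNReal _ hC, Real.dist_eq κ₁]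
    refine this.trans (le_of_eq ?_)
    simp only [C]; ring
  -- endpoint κ = 0
  have hmono : ∀ s ∈ Icc p q, ∀ t ∈ Icc p q, s ≤ t → ∀ κ, W κ s - κ * (t - s) ≤ W κ t := by
    intro s hs t ht hst κ
    have hmn : MonotoneOn (fun x => W κ x + κ * x) (Icc p q) := by
      refine monotoneOn_of_hasDerivWithinAt_nonneg (convex_Icc p q)
        (f' := fun x => ricF c h κ x (W κ x) + κ)
        ((hWc κ).add (by fun_prop)) (fun x hx => ?_) (fun x hx => ?_)
      · have := ((hasDerivAt_id x).const_mul κ).hasDerivWithinAt (s := interior (Icc p q))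
        have h2 := ((hW κ x (interior_subset hx)).mono interior_subset).fun_add this
        simpa using h2
      · have := mul_nonneg (sub_nonneg.2 (clampK_sq_le hc (W κ x))) (h0 x (interior_subset hx))
        unfold ricF; linarith
    have := hmn hs ht hst
    simp only at this; linarith
  have h00 : -c ≤ W 0 q := by
    have := hmono p ⟨le_rfl, hpq.le⟩ q ⟨hpq.le, le_rfl⟩ hpq.le 0
    rw [hWp] at this; linarith
  have hcc : c ^ 2 = clampK c c ^ 2 := (clampK_sq_of_ge hc le_rfl).symm
  have hcc' : c ^ 2 = clampK c (-c) ^ 2 := (clampK_sq_of_le hc le_rfl).symm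
  have hKK : W K q ≤ -c := by
    have e1 : W K m₁ ≤ c := barrier K hK0 p ⟨le_rfl, hpq.le⟩ c hcc (hWp K).le m₁ ⟨hp, by linarith⟩
    have e2 : W K m₂ ≤ -c := by
      have ha : AntitoneOn (fun x => W K x + 2 * c / (m₂ - m₁) * x) (Icc m₁ m₂) := by
        have hss : Icc m₁ m₂ ⊆ Icc p q := Icc_subset_Icc hp hq
        refine antitoneOn_of_hasDerivWithinAt_nonpos (convex_Icc m₁ m₂)
          (f' := fun x => ricF c h K x (W K x) + 2 * c / (m₂ - m₁))
          (((hWc K).mono hss).add (by fun_prop)) (fun x hx => ?_) (fun x hx => ?_)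
        · have := ((hasDerivAt_id x).const_mul (2 * c / (m₂ - m₁))).hasDerivWithinAt
            (s := interior (Icc m₁ m₂))
          have h2 := ((hW K x (hss (interior_subset hx))).mono (interior_subset.trans hss)).fun_add this
          simpa using h2
        · have hx' := interior_subset hx
          have : (c ^ 2 - clampK c (W K x) ^ 2) * h x ≤ c ^ 2 * B :=
            mul_le_mul (by nlinarith [sq_nonneg (clampK c (W K x))]) (hB x hx')
              (h0 x (hss hx')) (by positivity)
          unfold ricF; linarith
      have := ha ⟨le_rfl, hm.le⟩ ⟨hm.le, le_rfl⟩ hm.le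
      simp only at this
      have e3 : 2 * c / (m₂ - m₁) * m₂ - 2 * c / (m₂ - m₁) * m₁ = 2 * c := by
        rw [← mul_sub]; field_simp
      linarith
    exact barrier K hK0 m₂ ⟨by linarith, hq⟩ (-c) hcc' e2 q ⟨hq, le_rfl⟩
  obtain ⟨κ, hκ, hκq⟩ := intermediate_value_Icc' hK0.le hLip.continuousOn ⟨hKK, h00⟩
  simp only at hκq
  have hκ0 : 0 < κ := by
    rcases hκ.1.eq_or_lt with h | h
    · subst h
      have := hmono p ⟨le_rfl, hpq.le⟩ q ⟨hpq.le, le_rfl⟩ hpq.le 0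
      rw [hWp] at this; linarith
    · exact h
  refine ⟨κ, hκ, W κ, hWp κ, hκq, fun t ht => ?_⟩
  have hb : |W κ t| ≤ c := by
    rw [abs_le]
    refine ⟨?_, barrier κ hκ0 p ⟨le_rfl, hpq.le⟩ c hcc (hWp κ).le t ht⟩
    by_contra! hlt
    have := barrier κ hκ0 t ht (W κ t) (clampK_sq_of_le hc hlt.le).symm le_rfl q ⟨ht.2, le_rfl⟩
    linarith
  refine ⟨hb, ?_, ?_, ?_⟩
  · have := hmono p ⟨le_rfl, hpq.le⟩ t ht ht.1 κ
    rwa [hWp] at this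
  · have := hmono t ht q ⟨hpq.le, le_rfl⟩ ht.2 κ
    linarith
  have := hW κ t ht
  unfold ricF at this
  rwa [clampK_of_mem hb] at this

/-- Existence of a global Riccati solution on `(0, M)`. -/
lemma riccati_exists {c M : ℝ} (hc : 0 < c) (hM : 0 < M) {h : ℝ → ℝ}
    (hcont : ContinuousOn h (Ioo 0 M)) (h0 : ∀ t ∈ Ioo 0 M, 0 ≤ h t) :
    ∃ κ K : ℝ, ∃ w : ℝ → ℝ, 0 ≤ K ∧ ∀ a ∈ Ioo 0 M,
      |w a| ≤ c ∧ c - K * a ≤ w a ∧ w a ≤ -c + K * (M - a) ∧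
      HasDerivAt w ((c ^ 2 - w a ^ 2) * h a - κ) a := by
  have hsub1 : Icc (M/4) (3*M/4) ⊆ Ioo 0 M := fun t ht => ⟨by linarith [ht.1], by linarith [ht.2]⟩
  obtain ⟨B, hB⟩ : ∃ B, ∀ t ∈ Icc (M/4) (3*M/4), h t ≤ B := by
    obtain ⟨B', hB'⟩ := (isCompact_Icc.image_of_continuousOn (hcont.mono hsub1)).bddAbove
    exact ⟨B', fun t ht => hB' (mem_image_of_mem _ ht)⟩
  have hB0 : 0 ≤ B := (h0 (M/4) (hsub1 ⟨le_rfl, by linarith⟩)).trans (hB _ ⟨le_rfl, by linarith⟩)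
  set e : ℕ → ℝ := fun n => M / 4 / (n + 1) with he
  have he0 : ∀ n, 0 < e n := fun n => by simp only [he]; positivity
  have he1 : ∀ n, e n ≤ M / 4 := fun n => by
    simp only [he]; apply div_le_self (by positivity); linarith [n.cast_nonneg (α := ℝ)]
  have het : Tendsto e atTop (nhds 0) := by
    have := (tendsto_one_div_add_atTop_nhds_zero_nat (𝕜 := ℝ)).const_mul (M / 4)
    simp only [mul_zero] at this
    refine this.congr fun n => ?_
    simp only [he]; ring
  have hsubn : ∀ n, Icc (e n) (M - e n) ⊆ Ioo 0 M := fun n t ht =>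
    ⟨by linarith [ht.1, he0 n], by linarith [ht.2, he0 n]⟩
  have key := fun n => shoot (p := e n) (q := M - e n) hc (he1 n) (by linarith : M/4 < 3*M/4)
    (by linarith [he1 n]) (hcont.mono (hsubn n)) (fun t ht => h0 t (hsubn n ht)) hB
  set K := c ^ 2 * B + 2 * c / (3 * M / 4 - M / 4) with hK
  have hK0 : 0 ≤ K := by
    have : 0 < 3 * M / 4 - M / 4 := by linarith
    positivity
  choose κ hκ w hwp hwq hw using key
  let U : Ultrafilter ℕ := hyperfilter ℕ
  have hU : (U : Filter ℕ) ≤ atTop := by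
    rw [← Nat.cofinite_eq_atTop]; exact hyperfilter_le_cofinite
  obtain ⟨κ₀, hκ₀, hκt⟩ := isCompact_Icc.ultrafilter_le_nhds' (U.map κ) (s := Icc 0 K)
    (show ∀ᶠ n in (U : Filter ℕ), κ n ∈ Icc 0 K from Eventually.of_forall hκ)
  have hκt : Tendsto κ U (nhds κ₀) := hκt
  have hev : ∀ a ∈ Ioo 0 M, ∀ᶠ n in atTop, a ∈ Icc (e n) (M - e n) := by
    intro a ha
    filter_upwards [het.eventually (gt_mem_nhds ha.1),
      het.eventually (gt_mem_nhds (sub_pos.2 ha.2))] with n h1 h2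
    exact ⟨h1.le, by linarith⟩
  have hlim : ∀ a, ∃ x, a ∈ Ioo 0 M → Tendsto (fun n => w n a) U (nhds x) := by
    intro a
    by_cases ha : a ∈ Ioo 0 M
    · obtain ⟨x, hx, hxt⟩ := isCompact_Icc.ultrafilter_le_nhds' (U.map (fun n => w n a))
        (s := Icc (-c) c)
        (by
          have : ∀ᶠ n in (U : Filter ℕ), w n a ∈ Icc (-c) c := by
            filter_upwards [hU (hev a ha)] with n hn
            exact abs_le.1 (hw n a hn).1
          exact this)
      exact ⟨x, fun _ => hxt⟩
    · exact ⟨0, fun h => absurd h ha⟩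
  choose W hW using hlim
  refine ⟨κ₀, K, W, hK0, fun a ha => ⟨?_, ?_, ?_, ?_⟩⟩
  · refine le_of_tendsto ((hW a ha).abs) ?_
    filter_upwards [hU (hev a ha)] with n hn using (hw n a hn).1
  · refine ge_of_tendsto (hW a ha) ?_
    filter_upwards [hU (hev a ha)] with n hn
    have h1 := (hw n a hn).2.1
    have h2 : κ n * (a - e n) ≤ K * a :=
      mul_le_mul (hκ n).2 (by linarith [he0 n]) (by linarith [hn.1]) hK0
    linarith
  · refine le_of_tendsto (hW a ha) ?_
    filter_upwards [hU (hev a ha)] with n hn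
    have h1 := (hw n a hn).2.2.1
    have h2 : κ n * (M - e n - a) ≤ K * (M - a) :=
      mul_le_mul (hκ n).2 (by linarith [he0 n]) (by linarith [hn.2]) hK0
    linarith
  · rw [hasDerivAt_iff_isLittleO, Asymptotics.isLittleO_iff]
    intro η hη
    have hca : ContinuousAt h a := hcont.continuousAt (Ioo_mem_nhds ha.1 ha.2)
    have hha := h0 a ha
    set L := c ^ 2 * (h a + 1) + K with hL
    have hL0 : 0 ≤ L := by positivity
    have ev1 : ∀ᶠ t in nhds a, h t < h a + 1 := hca.eventually (gt_mem_nhds (by linarith))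
    have ev2 : ∀ᶠ t in nhds a, c ^ 2 * |h t - h a| < η / 2 := by
      have : Tendsto (fun t => c ^ 2 * |h t - h a|) (nhds a) (nhds (c ^ 2 * |h a - h a|)) :=
        ((hca.sub_const (h a)).abs).const_mul _
      refine this.eventually (gt_mem_nhds ?_)
      simpa using hη
    have ev3 : ∀ᶠ t in nhds a, 2 * c * (L * |t - a|) * h a < η / 2 := by
      have : Tendsto (fun t => 2 * c * (L * |t - a|) * h a) (nhds a)
          (nhds (2 * c * (L * |a - a|) * h a)) := by
        apply Continuous.tendsto; fun_prop
      refine this.eventually (gt_mem_nhds ?_)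
      simpa using hη
    have ev4 : ∀ᶠ t in nhds a, t ∈ Ioo (a/2) ((a + M)/2) :=
      Ioo_mem_nhds (by linarith [ha.1]) (by linarith [ha.2])
    obtain ⟨r, hr, hball⟩ := Metric.eventually_nhds_iff_ball.1 (ev1.and (ev2.and (ev3.and ev4)))
    filter_upwards [Metric.ball_mem_nhds a hr] with b hb
    have hb0 : b ∈ Ioo 0 M := by
      have := (hball b hb).2.2.2
      exact ⟨by linarith [this.1, ha.1], by linarith [this.2, ha.2]⟩
    have haa : a ∈ Metric.ball a r := Metric.mem_ball_self hr
    have main : ∀ᶠ n in (U : Filter ℕ),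
        |w n b - w n a - (b - a) * ((c ^ 2 - w n a ^ 2) * h a - κ n)| ≤ η * |b - a| := by
      filter_upwards [hU (hev (a/2) ⟨by linarith [ha.1], by linarith [ha.1, ha.2]⟩),
        hU (hev ((a+M)/2) ⟨by linarith [ha.1], by linarith [ha.1, ha.2]⟩)] with n hn1 hn2
      have hsubb : Metric.ball a r ⊆ Icc (e n) (M - e n) := fun t ht => by
        have := (hball t ht).2.2.2
        exact ⟨by linarith [this.1, hn1.1], by linarith [this.2, hn2.2]⟩
      have hd : ∀ t ∈ Metric.ball a r, HasDerivWithinAt (w n) ((c ^ 2 - w n t ^ 2) * h t - κ n)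
          (Metric.ball a r) t := fun t ht => (hw n t (hsubb ht)).2.2.2.mono hsubb
      have habs : ∀ t ∈ Metric.ball a r, |w n t| ≤ c := fun t ht => (hw n t (hsubb ht)).1
      have hsq : ∀ t ∈ Metric.ball a r, 0 ≤ c ^ 2 - w n t ^ 2 ∧ c ^ 2 - w n t ^ 2 ≤ c ^ 2 :=
        fun t ht => ⟨sub_nonneg.2 (sq_le_sq' (abs_le.1 (habs t ht)).1 (abs_le.1 (habs t ht)).2),
          by nlinarith [sq_nonneg (w n t)]⟩
      have hlip : ∀ t ∈ Metric.ball a r, |w n t - w n a| ≤ L * |t - a| := by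
        intro t ht
        refine (convex_ball a r).norm_image_sub_le_of_norm_hasDerivWithin_le hd (fun s hs => ?_)
          haa ht
        rw [Real.norm_eq_abs]
        refine (abs_sub _ _).trans ?_
        have hs0 := h0 s (hsubn n (hsubb hs))
        rw [abs_of_nonneg (hκ n).1, abs_of_nonneg (mul_nonneg (hsq s hs).1 hs0)]
        have := mul_le_mul (hsq s hs).2 (hball s hs).1.le hs0 (by positivity)
        linarith [(hκ n).2]
      have hd2 : ∀ t ∈ Metric.ball a r, HasDerivWithinAt
          (fun t => w n t - t * ((c ^ 2 - w n a ^ 2) * h a - κ n))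
          ((c ^ 2 - w n t ^ 2) * h t - κ n - 1 * ((c ^ 2 - w n a ^ 2) * h a - κ n))
          (Metric.ball a r) t := fun t ht =>
        (hd t ht).fun_sub ((hasDerivWithinAt_id t _).mul_const _)
      have hfin := (convex_ball a r).norm_image_sub_le_of_norm_hasDerivWithin_le (C := η) hd2
        (fun t ht => ?_) haa hb
      · rw [Real.norm_eq_abs, Real.norm_eq_abs] at hfin
        convert hfin using 2; ring
      · rw [Real.norm_eq_abs]
        have e1 : (c ^ 2 - w n t ^ 2) * h t - κ n - 1 * ((c ^ 2 - w n a ^ 2) * h a - κ n)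
          = (c ^ 2 - w n t ^ 2) * (h t - h a) - ((w n t + w n a) * (w n t - w n a)) * h a := by ring
        rw [e1]
        refine (abs_sub _ _).trans ?_
        rw [abs_mul, abs_mul, abs_mul, abs_of_nonneg (hsq t ht).1, abs_of_nonneg hha]
        have f1 : (c ^ 2 - w n t ^ 2) * |h t - h a| ≤ c ^ 2 * |h t - h a| :=
          mul_le_mul_of_nonneg_right (hsq t ht).2 (abs_nonneg _)
        have f2 : |w n t + w n a| ≤ 2 * c :=
          (abs_add_le _ _).trans (by linarith [habs t ht, habs a haa])
        have f3 : |w n t + w n a| * |w n t - w n a| * h a ≤ 2 * c * (L * |t - a|) * h a :=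
          mul_le_mul_of_nonneg_right
            (mul_le_mul f2 (hlip t ht) (abs_nonneg _) (by positivity)) hha
        have f4 := (hball t ht).2.1
        have f5 := (hball t ht).2.2.1
        linarith
    have hT : Tendsto (fun n => |w n b - w n a - (b - a) * ((c ^ 2 - w n a ^ 2) * h a - κ n)|) U
        (nhds |W b - W a - (b - a) * ((c ^ 2 - W a ^ 2) * h a - κ₀)|) :=
      (((hW b hb0).sub (hW a ha)).sub
        (((((hW a ha).pow 2).const_sub _).mul_const _ |>.sub hκt).const_mul _)).abs
    have := le_of_tendsto hT main
    simpa [Real.norm_eq_abs, smul_eq_mul] using this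

lemma vanish_seq {l u z C η : ℝ} (hlu : l < u) (hz : z ∈ Icc l u) (hη : 0 < η) {G v : ℝ → ℝ}
    (hG : ∀ a ∈ Ioo l u, 0 < G a ∧ G a ≤ C * |a - z|)
    (hv : IntegrableOn (fun a => v a / G a) (Ioo l u)) : ∃ a ∈ Ioo l u, v a < η := by
  by_contra! hcon
  have hint : IntegrableOn (fun a => (a - z)⁻¹) (Ioo l u) := by
    refine Integrable.mono' (hv.const_mul (C / η)) (by fun_prop) ?_
    filter_upwards [ae_restrict_mem measurableSet_Ioo] with a ha
    obtain ⟨h1, h2⟩ := hG a ha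
    have h3 := hcon a ha
    have h4 : 0 < C * |a - z| := h1.trans_le h2
    have h5 : 0 < |a - z| := by
      rcases (abs_nonneg (a - z)).eq_or_lt with h | h
      · rw [← h] at h4; simp at h4
      · exact h
    have hC : 0 < C := pos_of_mul_pos_left h4 h5.le
    rw [norm_inv, Real.norm_eq_abs, div_mul_div_comm, inv_eq_one_div, div_le_div_iff₀ h5 (by positivity)]
    calc 1 * (η * G a) ≤ η * (C * |a - z|) := by rw [one_mul]; gcongr
      _ ≤ v a * (C * |a - z|) := by gcongr
      _ = C * v a * |a - z| := by ring
  have : IntervalIntegrable (fun a => (a - z)⁻¹) volume l u := by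
    rw [intervalIntegrable_iff_integrableOn_Ioo_of_le hlu.le]; exact hint
  rw [intervalIntegrable_sub_inv_iff, uIcc_of_le hlu.le] at this
  rcases this with h | h
  · exact hlu.ne h
  · exact h hz

lemma lower_bound_s1 {M ν c κ C δ : ℝ} (hM : 0 < M) (hc : 0 < c) (hcν : c = 2 * π * ν) (hδ : 0 < δ)
    {G w f : ℝ → ℝ} (hp : ∀ a ∈ Ioo 0 M, 0 < G a)
    (hC0 : ∀ a ∈ Ioo 0 M, a < δ → G a ≤ C * a)
    (hCM : ∀ a ∈ Ioo 0 M, M - δ < a → G a ≤ C * (M - a))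
    (hw : ∀ a ∈ Ioo 0 M, |w a| ≤ c ∧ HasDerivAt w ((c ^ 2 - w a ^ 2) * (G a)⁻¹ - κ) a)
    (hf : Admissible M G f) : κ ≤ rayleigh M ν G f := by
  obtain ⟨-, hne, hdiff, hi1, hi2, hi3⟩ := hf
  have hv0 : 0 < ∫ a in Ioo 0 M, f a ^ 2 := by
    refine lt_of_le_of_ne (integral_nonneg fun a => sq_nonneg _) fun h => hne ?_
    rw [eq_comm, integral_eq_zero_iff_of_nonneg (fun a => sq_nonneg _) hi1] at h
    filter_upwards [h] with a ha
    simpa using ha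
  set E : ℝ → ℝ := fun a => G a * (deriv f a) ^ 2 + 4 * π ^ 2 * ν ^ 2 * (f a) ^ 2 / G a with hE
  have hEi : IntegrableOn E (Ioo 0 M) := by
    refine hi2.add ((hi3.const_mul (4 * π ^ 2 * ν ^ 2)).congr (Eventually.of_forall fun a => ?_))
    simp only; ring
  set Φ : ℝ → ℝ := fun a => E a - κ * f a ^ 2 with hΦ
  have hΦi : IntegrableOn Φ (Ioo 0 M) := hEi.sub (hi1.const_mul κ)
  have hΦint : ∫ a in Ioo 0 M, Φ a = (∫ a in Ioo 0 M, E a) - κ * ∫ a in Ioo 0 M, f a ^ 2 := by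
    rw [hΦ, integral_sub hEi (hi1.const_mul κ), integral_const_mul]
  suffices h : 0 ≤ ∫ a in Ioo 0 M, Φ a by
    unfold rayleigh
    rw [le_div_iff₀ hv0]
    rw [hΦint] at h
    linarith
  have hpt : ∀ a ∈ Ioo 0 M, HasDerivAt (fun a => w a * f a ^ 2)
      (((c ^ 2 - w a ^ 2) * (G a)⁻¹ - κ) * f a ^ 2 + w a * (2 * f a * deriv f a)) a := by
    intro a ha
    have h1 := (hdiff a ha).hasDerivAt.fun_pow 2
    have h2 := (hw a ha).2.fun_mul h1
    simpa using h2
  have hle : ∀ a ∈ Ioo 0 M,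
      ((c ^ 2 - w a ^ 2) * (G a)⁻¹ - κ) * f a ^ 2 + w a * (2 * f a * deriv f a) ≤ Φ a := by
    intro a ha
    have hg := hp a ha
    have : Φ a - (((c ^ 2 - w a ^ 2) * (G a)⁻¹ - κ) * f a ^ 2 + w a * (2 * f a * deriv f a))
        = (G a * deriv f a - w a * f a) ^ 2 / G a := by
      simp only [hΦ, hE, hcν]; field_simp; ring
    have h2 : 0 ≤ (G a * deriv f a - w a * f a) ^ 2 / G a := by positivity
    linarith
  have hstep : ∀ p ∈ Ioo 0 M, ∀ q ∈ Ioo 0 M, p ≤ q →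
      w q * f q ^ 2 - w p * f p ^ 2 ≤ ∫ a in p..q, Φ a := by
    intro p hp' q hq' hpq
    have hss : Icc p q ⊆ Ioo 0 M := fun a ha => ⟨hp'.1.trans_le ha.1, ha.2.trans_lt hq'.2⟩
    exact intervalIntegral.sub_le_integral_of_hasDeriv_right_of_le (g := fun a => w a * f a ^ 2) hpq
      (fun a ha => (hpt a (hss ha)).continuousAt.continuousWithinAt)
      (fun a ha => (hpt a (hss (Ioo_subset_Icc_self ha))).hasDerivWithinAt)
      (hΦi.mono_set hss) (fun a ha => hle a (hss (Ioo_subset_Icc_self ha)))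
  set d : ℕ → ℝ := fun n => min (min δ (M / 2)) (1 / (n + 1)) with hd
  have hd0 : ∀ n, 0 < d n := fun n => by
    simp only [hd]; refine lt_min (lt_min hδ (by linarith)) (by positivity)
  have hdδ : ∀ n, d n ≤ δ := fun n => (min_le_left _ _).trans (min_le_left _ _)
  have hdM : ∀ n, d n ≤ M / 2 := fun n => (min_le_left _ _).trans (min_le_right _ _)
  have hdn : ∀ n, d n ≤ 1 / (n + 1) := fun n => min_le_right _ _
  have hdt : Tendsto d atTop (nhds 0) :=
    tendsto_of_tendsto_of_tendsto_of_le_of_le tendsto_const_nhds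
      (tendsto_one_div_add_atTop_nhds_zero_nat (𝕜 := ℝ)) (fun n => (hd0 n).le) hdn
  have hP : ∀ n, ∃ a ∈ Ioo 0 (d n), f a ^ 2 < d n := fun n =>
    vanish_seq (G := G) (v := fun a => f a ^ 2) (z := 0) (C := C) (hd0 n) ⟨le_rfl, (hd0 n).le⟩ (hd0 n)
      (fun a ha => by
        have ha' : a ∈ Ioo 0 M := ⟨ha.1, by linarith [ha.2, hdM n]⟩
        refine ⟨hp a ha', ?_⟩
        rw [sub_zero, abs_of_pos ha.1]
        exact hC0 a ha' (ha.2.trans_le (hdδ n)))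
      (hi3.mono_set fun a ha => ⟨ha.1, by linarith [ha.2, hdM n]⟩)
  have hQ : ∀ n, ∃ a ∈ Ioo (M - d n) M, f a ^ 2 < d n := fun n =>
    vanish_seq (G := G) (v := fun a => f a ^ 2) (z := M) (C := C) (by linarith [hd0 n])
      ⟨by linarith [hd0 n], le_rfl⟩ (hd0 n)
      (fun a ha => by
        have ha' : a ∈ Ioo 0 M := ⟨by linarith [ha.1, hdM n], ha.2⟩
        refine ⟨hp a ha', ?_⟩
        rw [abs_sub_comm, abs_of_pos (sub_pos.2 ha.2)]
        exact hCM a ha' (by linarith [ha.1, hdδ n]))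
      (hi3.mono_set fun a ha => ⟨by linarith [ha.1, hdM n], ha.2⟩)
  choose p hp1 hp2 using hP
  choose q hq1 hq2 using hQ
  have hpt0 : Tendsto p atTop (nhds 0) :=
    tendsto_of_tendsto_of_tendsto_of_le_of_le tendsto_const_nhds hdt
      (fun n => (hp1 n).1.le) (fun n => (hp1 n).2.le)
  have hqt : Tendsto q atTop (nhds M) := by
    have : Tendsto (fun n => M - d n) atTop (nhds (M - 0)) := hdt.const_sub M
    rw [sub_zero] at this
    exact tendsto_of_tendsto_of_tendsto_of_le_of_le this tendsto_const_nhds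
      (fun n => (hq1 n).1.le) (fun n => (hq1 n).2.le)
  have hlim := (aecover_Ioo_of_Ioc (μ := volume) hpt0 hqt).integral_tendsto_of_countably_generated hΦi
  have hz : Tendsto (fun n => -(2 * c) * d n) atTop (nhds 0) := by
    simpa using hdt.const_mul (-(2 * c))
  refine le_of_tendsto_of_tendsto' hz hlim fun n => ?_
  have hpM : p n ∈ Ioo 0 M := ⟨(hp1 n).1, by linarith [(hp1 n).2, hdM n]⟩
  have hqM : q n ∈ Ioo 0 M := ⟨by linarith [(hq1 n).1, hdM n], (hq1 n).2⟩
  have hpq : p n ≤ q n := by linarith [(hp1 n).2, (hq1 n).1, hdM n]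
  have h1 := hstep _ hpM _ hqM hpq
  have hss : Ioc (p n) (q n) ⊆ Ioo 0 M := fun a ha => ⟨hpM.1.trans ha.1, ha.2.trans_lt hqM.2⟩
  rw [Measure.restrict_restrict measurableSet_Ioc, inter_eq_left.2 hss,
    ← intervalIntegral.integral_of_le hpq]
  have h2 := abs_le.1 (hw _ hpM).1
  have h3 := abs_le.1 (hw _ hqM).1
  have h4 : w (p n) * f (p n) ^ 2 ≤ c * d n :=
    mul_le_mul h2.2 (hp2 n).le (sq_nonneg _) hc.le
  have h5 : -w (q n) * f (q n) ^ 2 ≤ c * d n :=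
    mul_le_mul (by linarith [h3.1]) (hq2 n).le (sq_nonneg _) hc.le
  linarith

lemma upper_bound {M ν c κ K : ℝ} (hM : 0 < M) (hc : 0 < c) (hcν : c = 2 * π * ν) (hK : 0 ≤ K)
    {G H w : ℝ → ℝ} (hGc : ContinuousOn G (Ioo 0 M)) (hHc : ContinuousOn H (Ioo 0 M))
    (hp : ∀ a ∈ Ioo 0 M, 0 < G a) (hpH : ∀ a ∈ Ioo 0 M, 0 < H a) (hHG : ∀ a ∈ Ioo 0 M, H a ≤ G a)
    (hw : ∀ a ∈ Ioo 0 M, |w a| ≤ c ∧ c - K * a ≤ w a ∧ w a ≤ -c + K * (M - a) ∧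
      HasDerivAt w ((c ^ 2 - w a ^ 2) * (H a)⁻¹ - κ) a) :
    ∃ f, Admissible M G f ∧ rayleigh M ν G f ≤ κ ∧
      (0 < volume {a ∈ Ioo (0:ℝ) M | H a < G a} → rayleigh M ν G f < κ) := by
  have hwd : ∀ a ∈ Ioo 0 M, HasDerivAt w ((c ^ 2 - w a ^ 2) * (H a)⁻¹ - κ) a :=
    fun a ha => (hw a ha).2.2.2
  have hwc : ContinuousOn w (Ioo 0 M) := fun a ha => (hwd a ha).continuousAt.continuousWithinAt
  have hsq : ∀ a ∈ Ioo 0 M, 0 ≤ c ^ 2 - w a ^ 2 := fun a ha =>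
    sub_nonneg.2 (sq_le_sq' (abs_le.1 (hw a ha).1).1 (abs_le.1 (hw a ha).1).2)
  -- cut-off points
  set a₀ := min (M / 4) (c / (K + 1)) with ha₀
  have ha0 : 0 < a₀ := lt_min (by linarith) (by positivity)
  have haM : a₀ ≤ M / 4 := min_le_left _ _
  have hKa : K * a₀ < c := by
    have h1 : a₀ ≤ c / (K + 1) := min_le_right _ _
    rw [le_div_iff₀ (by linarith)] at h1
    nlinarith
  have hwl : ∀ a ∈ Ioo 0 M, a ≤ a₀ → 0 < w a := fun a ha h => by
    have := (hw a ha).2.1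
    nlinarith [mul_le_mul_of_nonneg_left h hK]
  have hwr : ∀ a ∈ Ioo 0 M, M - a₀ ≤ a → w a < 0 := fun a ha h => by
    have := (hw a ha).2.2.1
    nlinarith [mul_le_mul_of_nonneg_left (by linarith : M - a ≤ a₀) hK]
  have ha0m : a₀ ∈ Ioo 0 M := ⟨ha0, by linarith⟩
  have hb0m : M - a₀ ∈ Ioo 0 M := ⟨by linarith, by linarith⟩
  have hκ : 0 < κ := by
    have hlt : a₀ < M - a₀ := by linarith
    have hss : Icc a₀ (M - a₀) ⊆ Ioo 0 M := fun a ha => ⟨ha0.trans_le ha.1, ha.2.trans_lt hb0m.2⟩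
    obtain ⟨x, hx, hxe⟩ := exists_hasDerivAt_eq_slope w
      (fun a => (c ^ 2 - w a ^ 2) * (H a)⁻¹ - κ) hlt (hwc.mono hss)
      (fun a ha => hwd a (hss (Ioo_subset_Icc_self ha)))
    have hx' := hss (Ioo_subset_Icc_self hx)
    have h1 := mul_nonneg (hsq x hx') (inv_nonneg.2 (hpH x hx').le)
    have h2 : (w (M - a₀) - w a₀) / (M - a₀ - a₀) < 0 :=
      div_neg_of_neg_of_pos (by linarith [hwl a₀ ha0m le_rfl, hwr _ hb0m le_rfl]) (by linarith)
    linarith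
  have hsq' : ∀ a ∈ Ioo 0 M, 0 < c ^ 2 - w a ^ 2 := by
    intro a ha
    refine lt_of_le_of_ne (hsq a ha) fun h => ?_
    have hd := hwd a ha
    rw [← h, zero_mul, zero_sub] at hd
    have hnear : ∀ᶠ x in nhds a, |w x| ≤ c := by
      filter_upwards [Ioo_mem_nhds ha.1 ha.2] with x hx using (hw x hx).1
    have h2 : w a ^ 2 = c ^ 2 := by linarith
    rcases sq_eq_sq_iff_eq_or_eq_neg.1 h2 with h3 | h3
    · have : IsLocalMax w a := by
        filter_upwards [hnear] with x hx
        rw [h3]; exact (abs_le.1 hx).2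
      have := this.hasDerivAt_eq_zero hd
      linarith
    · have : IsLocalMin w a := by
        filter_upwards [hnear] with x hx
        rw [h3]; exact (abs_le.1 hx).1
      have := this.hasDerivAt_eq_zero hd
      linarith
  -- the phase
  have hwG : ContinuousOn (fun t => w t / G t) (Ioo 0 M) := hwc.div hGc fun t ht => (hp t ht).ne'
  set φ : ℝ → ℝ := fun a => ∫ t in (M / 2)..a, w t / G t with hφ
  have hm : M / 2 ∈ Ioo 0 M := ⟨by linarith, by linarith⟩
  have hφd : ∀ a ∈ Ioo 0 M, HasDerivAt φ (w a / G a) a := by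
    intro a ha
    refine intervalIntegral.integral_hasDerivAt_right ?_
      (hwG.stronglyMeasurableAtFilter isOpen_Ioo a ha)
      (hwG.continuousAt (Ioo_mem_nhds ha.1 ha.2))
    exact (hwG.mono ((ordConnected_Ioo).uIcc_subset hm ha)).intervalIntegrable
  have hφc : ContinuousOn φ (Ioo 0 M) := fun a ha => (hφd a ha).continuousAt.continuousWithinAt
  obtain ⟨D, hD⟩ : ∃ D, ∀ a ∈ Ioo 0 M, φ a ≤ D := by
    have hss : Icc a₀ (M - a₀) ⊆ Ioo 0 M := fun a ha => ⟨ha0.trans_le ha.1, ha.2.trans_lt hb0m.2⟩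
    obtain ⟨D, hD⟩ := (isCompact_Icc.image_of_continuousOn (hφc.mono hss)).bddAbove
    have hD' : ∀ a ∈ Icc a₀ (M - a₀), φ a ≤ D := fun a ha => hD (mem_image_of_mem _ ha)
    refine ⟨D, fun a ha => ?_⟩
    rcases lt_or_ge a a₀ with h1 | h1
    · have hs1 : Icc a a₀ ⊆ Ioo 0 M := fun t ht => ⟨ha.1.trans_le ht.1, ht.2.trans_lt ha0m.2⟩
      have : MonotoneOn φ (Icc a a₀) := by
        refine monotoneOn_of_hasDerivWithinAt_nonneg (convex_Icc _ _) (f' := fun t => w t / G t)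
          (hφc.mono hs1) (fun t ht => (hφd t (hs1 (interior_subset ht))).hasDerivWithinAt)
          (fun t ht => ?_)
        have ht' := interior_subset ht
        exact div_nonneg (hwl t (hs1 ht') ht'.2).le (hp t (hs1 ht')).le
      exact (this ⟨le_rfl, h1.le⟩ ⟨h1.le, le_rfl⟩ h1.le).trans (hD' _ ⟨le_rfl, by linarith⟩)
    rcases lt_or_ge (M - a₀) a with h2 | h2
    · have hs1 : Icc (M - a₀) a ⊆ Ioo 0 M := fun t ht => ⟨hb0m.1.trans_le ht.1, ht.2.trans_lt ha.2⟩
      have : AntitoneOn φ (Icc (M - a₀) a) := by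
        refine antitoneOn_of_hasDerivWithinAt_nonpos (convex_Icc _ _) (f' := fun t => w t / G t)
          (hφc.mono hs1) (fun t ht => (hφd t (hs1 (interior_subset ht))).hasDerivWithinAt)
          (fun t ht => ?_)
        have ht' := interior_subset ht
        exact div_nonpos_of_nonpos_of_nonneg (hwr t (hs1 ht') ht'.1).le (hp t (hs1 ht')).le
      exact (this ⟨le_rfl, h2.le⟩ ⟨h2.le, le_rfl⟩ h2.le).trans (hD' _ ⟨by linarith, le_rfl⟩)
    · exact hD' a ⟨h1, h2⟩
  classical
  set f : ℝ → ℝ := (Ioo 0 M).piecewise (fun a => exp (φ a)) (fun _ => 0) with hf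
  have hfe : ∀ a ∈ Ioo 0 M, f a = exp (φ a) := fun a ha => piecewise_eq_of_mem _ _ _ ha
  have hfpos : ∀ a ∈ Ioo 0 M, 0 < f a := fun a ha => by rw [hfe a ha]; exact exp_pos _
  have hfmeas : Measurable f :=
    ContinuousOn.measurable_piecewise (Real.continuous_exp.comp_continuousOn hφc)
      continuousOn_const measurableSet_Ioo
  have hfd : ∀ a ∈ Ioo 0 M, HasDerivAt f (f a * (w a / G a)) a := by
    intro a ha
    rw [hfe a ha]
    refine (hφd a ha).exp.congr_of_eventuallyEq ?_
    filter_upwards [Ioo_mem_nhds ha.1 ha.2] with x hx using hfe x hx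
  have hfc : ContinuousOn f (Ioo 0 M) := fun a ha => (hfd a ha).continuousAt.continuousWithinAt
  have hui : IntegrableOn (fun a => f a ^ 2) (Ioo 0 M) := by
    refine Measure.integrableOn_of_bounded (M := exp D ^ 2) (by simp) (by fun_prop) ?_
    filter_upwards [ae_restrict_mem measurableSet_Ioo] with a ha
    rw [Real.norm_eq_abs, abs_of_nonneg (sq_nonneg _)]
    refine pow_le_pow_left₀ (hfpos a ha).le ?_ 2
    rw [hfe a ha]; exact exp_le_exp.2 (hD a ha)
  -- the auxiliary densities
  set F : ℝ → ℝ := fun a => 2 * w a ^ 2 * f a ^ 2 / G a + (c ^ 2 - w a ^ 2) * f a ^ 2 / H a with hF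
  set E : ℝ → ℝ := fun a => (c ^ 2 + w a ^ 2) * f a ^ 2 / G a with hE
  have hFc : ContinuousOn F (Ioo 0 M) :=
    (((continuousOn_const.mul (hwc.pow 2)).mul (hfc.pow 2)).div hGc fun t ht => (hp t ht).ne').add
      (((continuousOn_const.sub (hwc.pow 2)).mul (hfc.pow 2)).div hHc fun t ht => (hpH t ht).ne')
  have hEc : ContinuousOn E (Ioo 0 M) :=
    ((continuousOn_const.add (hwc.pow 2)).mul (hfc.pow 2)).div hGc fun t ht => (hp t ht).ne'
  have hF0 : ∀ a ∈ Ioo 0 M, 0 ≤ F a := fun a ha =>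
    add_nonneg (div_nonneg (by positivity) (hp a ha).le)
      (div_nonneg (mul_nonneg (hsq a ha) (sq_nonneg _)) (hpH a ha).le)
  have hpt : ∀ a ∈ Ioo 0 M, HasDerivAt (fun a => w a * f a ^ 2) (F a - κ * f a ^ 2) a := by
    intro a ha
    have h1 := (hfd a ha).fun_pow 2
    have h2 := (hwd a ha).fun_mul h1
    refine h2.congr_deriv ?_
    have h3 := (hp a ha).ne'
    have h4 := (hpH a ha).ne'
    simp only [hF]; push_cast; field_simp; ring
  set p : ℕ → ℝ := fun n => a₀ / (n + 1) with hpdef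
  have hp0 : ∀ n, 0 < p n := fun n => by simp only [hpdef]; positivity
  have hpa : ∀ n, p n ≤ a₀ := fun n => by
    simp only [hpdef]; apply div_le_self ha0.le; linarith [n.cast_nonneg (α := ℝ)]
  have hpt0 : Tendsto p atTop (nhds 0) := by
    have := (tendsto_one_div_add_atTop_nhds_zero_nat (𝕜 := ℝ)).const_mul a₀
    simp only [mul_zero] at this
    refine this.congr fun n => ?_
    simp only [hpdef]; ring
  have hqt : Tendsto (fun n => M - p n) atTop (nhds M) := by
    simpa using hpt0.const_sub M
  have hcov := aecover_Ioo_of_Ioc (μ := volume) hpt0 hqt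
  have hIcc : ∀ n, Icc (p n) (M - p n) ⊆ Ioo 0 M := fun n a ha =>
    ⟨(hp0 n).trans_le ha.1, by linarith [ha.2, hp0 n]⟩
  have hIoc : ∀ n, Ioc (p n) (M - p n) ⊆ Ioo 0 M := fun n => Ioc_subset_Icc_self.trans (hIcc n)
  have hpq : ∀ n, p n ≤ M - p n := fun n => by linarith [hpa n]
  have hFi : ∀ n, IntegrableOn F (Ioc (p n) (M - p n)) := fun n =>
    ((hFc.mono (hIcc n)).integrableOn_Icc).mono_set Ioc_subset_Icc_self
  have hrr : ∀ n, (volume.restrict (Ioo 0 M)).restrict (Ioc (p n) (M - p n))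
      = volume.restrict (Ioc (p n) (M - p n)) := fun n => by
    rw [Measure.restrict_restrict measurableSet_Ioc, inter_eq_left.2 (hIoc n)]
  have hFle : ∀ n, ∫ a in Ioc (p n) (M - p n), F a ≤ κ * ∫ a in Ioo 0 M, f a ^ 2 := by
    intro n
    have hu : IntegrableOn (fun a => κ * f a ^ 2) (Ioc (p n) (M - p n)) :=
      (hui.mono_set (hIoc n)).const_mul κ
    have h1 : ∫ a in (p n)..(M - p n), (F a - κ * f a ^ 2)
        = w (M - p n) * f (M - p n) ^ 2 - w (p n) * f (p n) ^ 2 := by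
      refine intervalIntegral.integral_eq_sub_of_hasDerivAt (f := fun a => w a * f a ^ 2)
        (fun a ha => hpt a (hIcc n (by rwa [uIcc_of_le (hpq n)] at ha))) ?_
      rw [intervalIntegrable_iff_integrableOn_Ioc_of_le (hpq n)]
      exact (hFi n).sub hu
    rw [intervalIntegral.integral_of_le (hpq n), integral_sub (hFi n) hu, integral_const_mul] at h1
    have hpm := hIcc n ⟨le_rfl, hpq n⟩
    have hqm := hIcc n ⟨hpq n, le_rfl⟩
    have h2 := mul_nonneg (hwl _ hpm (hpa n)).le (sq_nonneg (f (p n)))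
    have h3 := mul_nonpos_of_nonpos_of_nonneg (hwr _ hqm (by linarith [hpa n])).le
      (sq_nonneg (f (M - p n)))
    have h4 : ∫ a in Ioc (p n) (M - p n), f a ^ 2 ≤ ∫ a in Ioo 0 M, f a ^ 2 :=
      setIntegral_mono_set hui (Eventually.of_forall fun a => sq_nonneg _)
        (HasSubset.Subset.eventuallyLE (hIoc n))
    have h5 := mul_le_mul_of_nonneg_left h4 hκ.le
    linarith
  have hFint : IntegrableOn F (Ioo 0 M) := by
    refine hcov.integrable_of_integral_bounded_of_nonneg_ae (κ * ∫ a in Ioo 0 M, f a ^ 2)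
      (fun n => ?_) ?_ (Eventually.of_forall fun n => ?_)
    · rw [IntegrableOn, hrr n]; exact hFi n
    · filter_upwards [ae_restrict_mem measurableSet_Ioo] with a ha using hF0 a ha
    · rw [hrr n]; exact hFle n
  have hFtot : ∫ a in Ioo 0 M, F a ≤ κ * ∫ a in Ioo 0 M, f a ^ 2 := by
    refine le_of_tendsto' (hcov.integral_tendsto_of_countably_generated hFint) fun n => ?_
    rw [hrr n]; exact hFle n
  have hdiff : ∀ a ∈ Ioo 0 M, F a - E a = (c ^ 2 - w a ^ 2) * f a ^ 2 * (G a - H a) / (G a * H a) := by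
    intro a ha
    have := hp a ha
    have := hpH a ha
    simp only [hF, hE]; field_simp; ring
  have hDnn : ∀ a ∈ Ioo 0 M, 0 ≤ F a - E a := fun a ha => by
    rw [hdiff a ha]
    exact div_nonneg (mul_nonneg (mul_nonneg (hsq a ha) (sq_nonneg _)) (sub_nonneg.2 (hHG a ha)))
      (mul_nonneg (hp a ha).le (hpH a ha).le)
  have hE0 : ∀ a ∈ Ioo 0 M, 0 ≤ E a := fun a ha => div_nonneg (by positivity) (hp a ha).le
  have hEint : IntegrableOn E (Ioo 0 M) := by
    refine Integrable.mono' hFint (hEc.aestronglyMeasurable measurableSet_Ioo) ?_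
    filter_upwards [ae_restrict_mem measurableSet_Ioo] with a ha
    rw [Real.norm_eq_abs, abs_of_nonneg (hE0 a ha)]
    linarith [hDnn a ha]
  have hu0 : 0 < ∫ a in Ioo 0 M, f a ^ 2 := by
    rw [setIntegral_pos_iff_support_of_nonneg_ae (Eventually.of_forall fun a => sq_nonneg _) hui]
    have : (Function.support fun a => f a ^ 2) ∩ Ioo 0 M = Ioo 0 M :=
      inter_eq_right.2 fun a ha => (pow_pos (hfpos a ha) 2).ne'
    rw [this]; simpa using hM
  have hray : rayleigh M ν G f = (∫ a in Ioo 0 M, E a) / ∫ a in Ioo 0 M, f a ^ 2 := by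
    unfold rayleigh
    congr 1
    refine setIntegral_congr_fun measurableSet_Ioo fun a ha => ?_
    have := hp a ha
    simp only [hE, (hfd a ha).deriv, hcν]; field_simp; ring
  have hED : ∫ a in Ioo 0 M, (F a - E a) = (∫ a in Ioo 0 M, F a) - ∫ a in Ioo 0 M, E a :=
    integral_sub hFint hEint
  refine ⟨f, ⟨hfmeas, ?_, fun a ha => (hfd a ha).differentiableAt, hui, ?_, ?_⟩, ?_, ?_⟩
  · intro h
    have : ∫ a in Ioo 0 M, f a ^ 2 = 0 := by
      rw [integral_eq_zero_of_ae]
      filter_upwards [h] with a ha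
      simp [ha]
    exact hu0.ne' this
  · have hc1 : ContinuousOn (fun a => w a ^ 2 * f a ^ 2 / G a) (Ioo 0 M) :=
      ((hwc.pow 2).mul (hfc.pow 2)).div hGc fun t ht => (hp t ht).ne'
    have : IntegrableOn (fun a => w a ^ 2 * f a ^ 2 / G a) (Ioo 0 M) := by
      refine Integrable.mono' hEint (hc1.aestronglyMeasurable measurableSet_Ioo) ?_
      filter_upwards [ae_restrict_mem measurableSet_Ioo] with a ha
      have hg := hp a ha
      rw [Real.norm_eq_abs, abs_of_nonneg (by positivity)]
      simp only [hE]
      gcongr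
      nlinarith [sq_nonneg c]
    refine this.congr_fun (fun a ha => ?_) measurableSet_Ioo
    have hg := hp a ha
    simp only [(hfd a ha).deriv]; field_simp
  · have hc1 : ContinuousOn (fun a => f a ^ 2 / G a) (Ioo 0 M) :=
      (hfc.pow 2).div hGc fun t ht => (hp t ht).ne'
    refine Integrable.mono' (hEint.const_mul (1 / c ^ 2))
      (hc1.aestronglyMeasurable measurableSet_Ioo) ?_
    filter_upwards [ae_restrict_mem measurableSet_Ioo] with a ha
    have hg := hp a ha
    rw [Real.norm_eq_abs, abs_of_nonneg (by positivity)]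
    have : 1 / c ^ 2 * E a - f a ^ 2 / G a = w a ^ 2 * f a ^ 2 / (c ^ 2 * G a) := by
      simp only [hE]; field_simp; ring
    have h2 : 0 ≤ w a ^ 2 * f a ^ 2 / (c ^ 2 * G a) := by positivity
    linarith
  · rw [hray, div_le_iff₀ hu0]
    have : 0 ≤ ∫ a in Ioo 0 M, (F a - E a) := setIntegral_nonneg measurableSet_Ioo hDnn
    linarith
  · intro hpos
    rw [hray, div_lt_iff₀ hu0]
    have : 0 < ∫ a in Ioo 0 M, (F a - E a) := by
      have hsub : IntegrableOn (fun a => F a - E a) (Ioo 0 M) := hFint.sub hEint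
      rw [setIntegral_pos_iff_support_of_nonneg_ae _ hsub]
      · refine hpos.trans_le (measure_mono fun a ha => ⟨?_, ha.1⟩)
        rw [Function.mem_support, hdiff a ha.1]
        have h1 := hp a ha.1
        have h2 := hpH a ha.1
        have h3 := hsq' a ha.1
        have h4 := hfpos a ha.1
        have h5 : 0 < G a - H a := sub_pos.2 ha.2
        positivity
      · filter_upwards [ae_restrict_mem measurableSet_Ioo] with a ha using hDnn a ha
    linarith

lemma rayleigh_nonneg {M ν : ℝ} {G f : ℝ → ℝ} (hp : ∀ a ∈ Ioo 0 M, 0 < G a) :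
    0 ≤ rayleigh M ν G f := by
  unfold rayleigh
  refine div_nonneg (setIntegral_nonneg measurableSet_Ioo fun a ha => ?_)
    (integral_nonneg fun a => sq_nonneg _)
  have := hp a ha
  positivity


/-- Monotonicity of the first eigenvalue `κ₁` of the one-dimensional reduced problem
with respect to the weight function `G` (case of a closed surface: singular behavior
`G(a) ~ 4πa` at `a = 0` and `G(a) ~ 4π(M-a)` at `a = M`). -/
theorem kappa1_antitone_in_weight_closed (M ν : ℝ) (hM : 0 < M) (hν : ν ∈ Ioc (0:ℝ) (1/2))
    (G₁ G₂ : ℝ → ℝ)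
    (hs₁ : ContDiffOn ℝ (⊤ : ℕ∞) G₁ (Ioo 0 M)) (hs₂ : ContDiffOn ℝ (⊤ : ℕ∞) G₂ (Ioo 0 M))
    (hp₁ : ∀ a ∈ Ioo (0:ℝ) M, 0 < G₁ a) (hp₂ : ∀ a ∈ Ioo (0:ℝ) M, 0 < G₂ a)
    (hle : ∀ a ∈ Ioo (0:ℝ) M, G₁ a ≤ G₂ a)
    (h₁ : Tendsto (fun a => G₁ a / (4 * π * a)) (nhdsWithin 0 (Ioo 0 M)) (nhds 1))
    (h₂ : Tendsto (fun a => G₂ a / (4 * π * a)) (nhdsWithin 0 (Ioo 0 M)) (nhds 1))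
    (h₁' : Tendsto (fun a => G₁ a / (4 * π * (M - a))) (nhdsWithin M (Ioo 0 M)) (nhds 1))
    (h₂' : Tendsto (fun a => G₂ a / (4 * π * (M - a))) (nhdsWithin M (Ioo 0 M)) (nhds 1)) :
    kappa1 M ν G₂ ≤ kappa1 M ν G₁ ∧
      (0 < volume {a ∈ Ioo (0:ℝ) M | G₁ a < G₂ a} →
        kappa1 M ν G₂ < kappa1 M ν G₁) := by
  have hν0 := hν.1
  set c := 2 * π * ν with hc'
  have hc : 0 < c := by positivity
  obtain ⟨κ, K, w, hK, hw⟩ := riccati_exists (h := fun a => (G₁ a)⁻¹) hc hM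
    (hs₁.continuousOn.inv₀ fun a ha => (hp₁ a ha).ne') (fun a ha => (inv_pos.2 (hp₁ a ha)).le)
  obtain ⟨f₁, hf₁, -⟩ := upper_bound (ν := ν) hM hc hc' hK hs₁.continuousOn hs₁.continuousOn
    hp₁ hp₁ (fun a _ => le_rfl) hw
  obtain ⟨f₂, hf₂, hle₂, hlt₂⟩ := upper_bound hM hc hc' hK hs₂.continuousOn hs₁.continuousOn
    hp₂ hp₁ hle hw
  have e1 := h₁.eventually (gt_mem_nhds (by norm_num : (1:ℝ) < 2))
  have e2 := h₁'.eventually (gt_mem_nhds (by norm_num : (1:ℝ) < 2))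
  rw [eventually_nhdsWithin_iff, Metric.eventually_nhds_iff] at e1 e2
  obtain ⟨δ₁, hδ₁, e1⟩ := e1
  obtain ⟨δ₂, hδ₂, e2⟩ := e2
  have hlow : κ ≤ kappa1 M ν G₁ := by
    refine le_csInf ⟨_, f₁, hf₁, rfl⟩ ?_
    rintro _ ⟨f, hf, rfl⟩
    refine lower_bound_s1 (C := 8 * π) (δ := min δ₁ δ₂) hM hc hc' (lt_min hδ₁ hδ₂) hp₁ ?_ ?_
      (fun a ha => ⟨(hw a ha).1, (hw a ha).2.2.2⟩) hf
    · intro a ha had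
      have := e1 (y := a) (by
        rw [Real.dist_eq, sub_zero, abs_of_pos ha.1]; exact had.trans_le (min_le_left _ _)) ha
      have ha1 := ha.1
      rw [div_lt_iff₀ (by positivity)] at this
      linarith
    · intro a ha had
      have ha1 : 0 < M - a := sub_pos.2 ha.2
      have := e2 (y := a) (by
        rw [Real.dist_eq, abs_sub_comm, abs_of_pos ha1]
        linarith [min_le_right δ₁ δ₂]) ha
      rw [div_lt_iff₀ (by positivity)] at this
      linarith
  have hup : kappa1 M ν G₂ ≤ rayleigh M ν G₂ f₂ :=
    csInf_le ⟨0, by rintro _ ⟨f, -, rfl⟩; exact rayleigh_nonneg hp₂⟩ ⟨f₂, hf₂, rfl⟩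
  exact ⟨by linarith, fun h => by linarith [hlt₂ h]⟩
end

section
/- Let α > 0. For every smooth function f : (0,π) → ℝ with compact support in (0,π), one has ∫₀^π (f'(r)² + α² f(r)²/sin²(r)) sin(r) dr ≥ α(α+1) ∫₀^π f(r)² sin(r) dr. -/
open MeasureTheory Real Set Filter intervalIntegral

/-- Variational lower bound for the singular Sturm–Liouville problem on `(0, π)`:
for every smooth `f` compactly supported in `(0, π)`,
`∫₀^π (f'² + α² f²/sin² r) sin r dr ≥ α(α+1) ∫₀^π f² sin r dr`. -/
theorem sturm_liouville_variational_bound (α : ℝ) (hα : 0 < α) (f : ℝ → ℝ)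
    (hf : ContDiff ℝ (⊤ : ℕ∞) f) (hsupp : HasCompactSupport f)
    (hsub : tsupport f ⊆ Ioo 0 π) :
    α * (α + 1) * ∫ r in (0:ℝ)..π, (f r) ^ 2 * Real.sin r ≤
      ∫ r in (0:ℝ)..π,
        ((deriv f r) ^ 2 + α ^ 2 * (f r) ^ 2 / (Real.sin r) ^ 2) * Real.sin r := by
  have hd : Differentiable ℝ f := hf.differentiable (by simp)
  have hc : Continuous f := hf.continuous
  have hdc : Continuous (deriv f) := hf.continuous_deriv (by simp)
  have hq : Continuous fun r => α ^ 2 * (f r) ^ 2 / (Real.sin r) ^ 2 := by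
    rw [continuous_iff_continuousAt]
    intro x
    by_cases hx : x ∈ tsupport f
    · have hs : Real.sin x ≠ 0 := (Real.sin_pos_of_mem_Ioo (hsub hx)).ne'
      exact ContinuousAt.div (by fun_prop) (by fun_prop) (pow_ne_zero 2 hs)
    · have h0 : f =ᶠ[nhds x] 0 := notMem_tsupport_iff_eventuallyEq.mp hx
      have h1 : (fun r => α ^ 2 * (f r) ^ 2 / (Real.sin r) ^ 2) =ᶠ[nhds x] fun _ => (0:ℝ) := by
        filter_upwards [h0] with r hr
        simp [hr]
      exact continuousAt_const.congr h1.symm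
  have hf0 : f 0 = 0 := image_eq_zero_of_notMem_tsupport fun h => lt_irrefl _ (hsub h).1
  have hfp : f π = 0 := image_eq_zero_of_notMem_tsupport fun h => lt_irrefl _ (hsub h).2
  have hG : ∫ r in (0:ℝ)..π, (2 * f r * deriv f r * Real.cos r - (f r) ^ 2 * Real.sin r) = 0 := by
    rw [intervalIntegral.integral_eq_sub_of_hasDerivAt (f := fun r => (f r) ^ 2 * Real.cos r)]
    · simp [hf0, hfp]
    · intro x _
      have h := ((hd x).hasDerivAt.pow 2).mul (Real.hasDerivAt_cos x)
      refine HasDerivAt.congr_deriv h ?_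
      simp only [Pi.pow_apply]
      push_cast
      ring
    · exact Continuous.intervalIntegrable (by fun_prop) _ _
  have key : ∫ r in (0:ℝ)..π, (α * (α + 1) * ((f r) ^ 2 * Real.sin r) +
      α * (2 * f r * deriv f r * Real.cos r - (f r) ^ 2 * Real.sin r)) ≤
      ∫ r in (0:ℝ)..π,
        ((deriv f r) ^ 2 + α ^ 2 * (f r) ^ 2 / (Real.sin r) ^ 2) * Real.sin r := by
    apply intervalIntegral.integral_mono_on_of_le_Ioo Real.pi_pos.le
    · exact Continuous.intervalIntegrable (by fun_prop) _ _
    · exact Continuous.intervalIntegrable (((hdc.pow 2).add hq).mul Real.continuous_sin) _ _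
    · intro x hx
      have hs : 0 < Real.sin x := Real.sin_pos_of_mem_Ioo hx
      have hsq : 0 ≤ Real.sin x * (deriv f x - α * f x * Real.cos x / Real.sin x) ^ 2 := by
        positivity
      have e : Real.sin x * (deriv f x - α * f x * Real.cos x / Real.sin x) ^ 2 =
          ((deriv f x) ^ 2 + α ^ 2 * (f x) ^ 2 / (Real.sin x) ^ 2) * Real.sin x -
          (α * (α + 1) * ((f x) ^ 2 * Real.sin x) +
            α * (2 * f x * deriv f x * Real.cos x - (f x) ^ 2 * Real.sin x)) := by
        have hcs : Real.cos x ^ 2 = 1 - Real.sin x ^ 2 := by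
          linarith [Real.sin_sq_add_cos_sq x]
        field_simp
        linear_combination (α ^ 2 * f x ^ 2) * hcs
      linarith
  rw [intervalIntegral.integral_add, intervalIntegral.integral_const_mul,
    intervalIntegral.integral_const_mul, hG, mul_zero, add_zero] at key
  · exact key
  · exact Continuous.intervalIntegrable (by fun_prop) _ _
  · exact Continuous.intervalIntegrable (by fun_prop) _ _
end

section
/- Let ν ∈ (0,1/2] and let G*(a) = a(4π−a) for a ∈ (0,4π). Then the infimum over all f in the admissible class F(G*) of the Rayleigh quotient (∫₀^{4π} (G*(a) f'(a)² + 4π²ν² f(a)²/G*(a)) da) / (∫₀^{4π} f(a)² da) equals ν(ν+1), and it is attained by the function f₀(a) = (a(4π−a))^{ν/2}. -/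
open MeasureTheory Real Set Filter

open Topology Asymptotics in
/-- If `H` is continuous on `[0,M]` and `H / G` is integrable then `H` vanishes at the ends. -/
lemma end_vanish {M : ℝ} (hM : 0 < M) {H : ℝ → ℝ} (hH : Continuous H) (c : ℝ)
    (hc : c = 0 ∨ c = M)
    (hint : IntervalIntegrable (fun a => H a / (a * (M - a))) volume 0 M) : H c = 0 := by
  by_contra hne
  refine not_intervalIntegrable_of_sub_inv_isBigO_punctured (f := fun a => H a / (a * (M - a)))
    (c := c) ?_ hM.ne ?_ hint
  · have hev : ∀ᶠ x in 𝓝 c, H x ≠ 0 := hH.continuousAt.eventually_ne hne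
    rcases hc with rfl | rfl
    · have h2 : ∀ᶠ x in 𝓝 (0:ℝ), M - x ≠ 0 :=
        (by fun_prop : ContinuousAt (fun x : ℝ => M - x) 0).eventually_ne (by simpa using hM.ne')
      have hb : (fun x => (M - x) / H x) =O[𝓝[≠] (0:ℝ)] (fun _ => (1:ℝ)) := by
        have : ContinuousAt (fun x => (M - x) / H x) 0 :=
          ContinuousAt.div (by fun_prop) hH.continuousAt hne
        exact (this.tendsto.mono_left nhdsWithin_le_nhds).isBigO_one ℝ
      have := hb.mul (isBigO_refl (fun a => H a / (a * (M - a))) (𝓝[≠] (0:ℝ)))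
      refine this.congr' ?_ ?_
      · filter_upwards [nhdsWithin_le_nhds hev, nhdsWithin_le_nhds h2, self_mem_nhdsWithin]
          with x h1 h2 h3
        have h3 : x ≠ 0 := h3
        simp only [sub_zero]
        field_simp
      · exact Eventually.of_forall fun x => by simp
    · have h2 : ∀ᶠ x in 𝓝 c, x ≠ 0 := continuousAt_id.eventually_ne hM.ne'
      have hb : (fun x => (-x) / H x) =O[𝓝[≠] c] (fun _ => (1:ℝ)) := by
        have : ContinuousAt (fun x => (-x) / H x) c :=
          ContinuousAt.div (by fun_prop) hH.continuousAt hne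
        exact (this.tendsto.mono_left nhdsWithin_le_nhds).isBigO_one ℝ
      have := hb.mul (isBigO_refl (fun a => H a / (a * (c - a))) (𝓝[≠] c))
      refine this.congr' ?_ ?_
      · filter_upwards [nhdsWithin_le_nhds hev, nhdsWithin_le_nhds h2, self_mem_nhdsWithin]
          with x h1 h2 h3
        have h3 : x ≠ c := h3
        have h4 : x - c ≠ 0 := sub_ne_zero.2 h3
        have h5 : c - x ≠ 0 := sub_ne_zero.2 h3.symm
        field_simp
        ring
      · exact Eventually.of_forall fun x => by simp
  · rcases hc with rfl | rfl <;> simp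

/-- Integrability of `f f'`. -/
lemma ff_int {M : ℝ} {f : ℝ → ℝ} (hf : Admissible M (fun a => a * (M - a)) f) :
    IntegrableOn (fun a => 2 * f a * deriv f a) (Ioo 0 M) := by
  obtain ⟨hm, -, hd, h1, h2, h3⟩ := hf
  refine Integrable.mono' (h2.add h3) ?_ ?_
  · exact ((hm.const_mul 2).mul (measurable_deriv f)).aestronglyMeasurable
  · refine (ae_restrict_iff' measurableSet_Ioo).2 (Eventually.of_forall fun a ha => ?_)
    have hG : 0 < a * (M - a) := mul_pos ha.1 (sub_pos.2 ha.2)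
    simp only [Pi.add_apply, Real.norm_eq_abs]
    set g := a * (M - a)
    have e1 : g * deriv f a ^ 2 + f a ^ 2 / g - 2 * f a * deriv f a
        = (g * deriv f a - f a) ^ 2 / g := by field_simp; ring
    have e2 : g * deriv f a ^ 2 + f a ^ 2 / g + 2 * f a * deriv f a
        = (g * deriv f a + f a) ^ 2 / g := by field_simp; ring
    have p1 : 0 ≤ (g * deriv f a - f a) ^ 2 / g := by positivity
    have p2 : 0 ≤ (g * deriv f a + f a) ^ 2 / g := by positivity
    rw [abs_le]; constructor <;> linarith

open Topology in
/-- The boundary values of `f²` vanish. -/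
lemma sq_tendsto {M : ℝ} (hM : 0 < M) {f : ℝ → ℝ}
    (hf : Admissible M (fun a => a * (M - a)) f) :
    Tendsto (fun a => f a ^ 2) (𝓝[>] 0) (𝓝 0) ∧ Tendsto (fun a => f a ^ 2) (𝓝[<] M) (𝓝 0) := by
  have hff := ff_int hf
  obtain ⟨hm, -, hd, h1, h2, h3⟩ := hf
  have hii : IntervalIntegrable (fun a => 2 * f a * deriv f a) volume 0 M :=
    (intervalIntegrable_iff_integrableOn_Ioo_of_le hM.le).2 hff
  set P : ℝ → ℝ := fun x => f (M/2) ^ 2 + ∫ t in (M/2)..x, 2 * f t * deriv f t with hP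
  have hPc : ContinuousOn P (Icc 0 M) := by
    have := intervalIntegral.continuousOn_primitive_interval' hii (a := M/2)
      (by rw [uIcc_of_le hM.le]; constructor <;> linarith)
    rw [uIcc_of_le hM.le] at this
    exact continuousOn_const.add this
  set H : ℝ → ℝ := IccExtend hM.le ((Icc 0 M).domRestrict P) with hHdef
  have hHc : Continuous H := hPc.domRestrict.Icc_extend'
  have hHe : ∀ x ∈ Ioo 0 M, H x = f x ^ 2 := by
    intro x hx
    rw [hHdef, IccExtend_of_mem _ _ (Ioo_subset_Icc_self hx)]
    have hsub : uIcc (M/2) x ⊆ Ioo 0 M :=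
      ordConnected_Ioo.uIcc_subset ⟨by linarith, by linarith⟩ hx
    have := intervalIntegral.integral_eq_sub_of_hasDerivAt (a := M/2) (b := x)
      (f := fun a => f a ^ 2) (f' := fun t => 2 * f t * deriv f t)
      (fun t ht => by
        have := (hd t (hsub ht)).hasDerivAt.pow 2
        exact this.congr_deriv (by simp))
      (hii.mono_set (by rw [uIcc_of_le hM.le]; exact hsub.trans Ioo_subset_Icc_self))
    rw [domRestrict_apply]
    change f (M/2) ^ 2 + (∫ t in (M/2)..x, 2 * f t * deriv f t) = f x ^ 2
    rw [this]
    ring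
  have hHi : IntervalIntegrable (fun a => H a / (a * (M - a))) volume 0 M := by
    rw [intervalIntegrable_iff_integrableOn_Ioo_of_le hM.le]
    exact h3.congr_fun (fun x hx => by simp only [hHe x hx]) measurableSet_Ioo
  have z0 := end_vanish hM hHc 0 (Or.inl rfl) hHi
  have z1 := end_vanish hM hHc M (Or.inr rfl) hHi
  constructor
  · have : Tendsto H (𝓝[>] 0) (𝓝 0) := by
      have := hHc.continuousAt.tendsto (x := 0)
      rw [z0] at this
      exact this.mono_left nhdsWithin_le_nhds
    refine this.congr' ?_
    filter_upwards [Ioo_mem_nhdsGT hM] with x hx using hHe x hx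
  · have : Tendsto H (𝓝[<] M) (𝓝 0) := by
      have := hHc.continuousAt.tendsto (x := M)
      rw [z1] at this
      exact this.mono_left nhdsWithin_le_nhds
    refine this.congr' ?_
    filter_upwards [Ioo_mem_nhdsLT hM] with x hx using hHe x hx

/-- The divergence term. -/
noncomputable def divTerm (M ν : ℝ) (f : ℝ → ℝ) (a : ℝ) : ℝ :=
  -ν * f a ^ 2 + ν / 2 * (M - 2 * a) * (2 * f a * deriv f a)

lemma divTerm_int {M ν : ℝ} {f : ℝ → ℝ}
    (hf : Admissible M (fun a => a * (M - a)) f) :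
    IntegrableOn (divTerm M ν f) (Ioo 0 M) := by
  have hff := ff_int hf
  obtain ⟨hm, -, hd, h1, h2, h3⟩ := hf
  refine (h1.const_mul (-ν)).add ?_
  have := (integrableOn_Icc_iff_integrableOn_Ioo (μ := volume)).2 hff
  refine (integrableOn_Icc_iff_integrableOn_Ioo (μ := volume)).1 ?_
  exact this.continuousOn_mul (g := fun a => ν / 2 * (M - 2 * a)) (by fun_prop) isCompact_Icc

open Topology in
lemma divTerm_zero {M ν : ℝ} (hM : 0 < M) {f : ℝ → ℝ}
    (hf : Admissible M (fun a => a * (M - a)) f) :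
    ∫ a in Ioo 0 M, divTerm M ν f a = 0 := by
  have hdi := divTerm_int (ν := ν) hf
  obtain ⟨t0, t1⟩ := sq_tendsto hM hf
  obtain ⟨hm, -, hd, h1, h2, h3⟩ := hf
  rw [← integral_Ioc_eq_integral_Ioo, ← intervalIntegral.integral_of_le hM.le]
  have key := intervalIntegral.integral_eq_sub_of_hasDerivAt_of_tendsto (a := 0) (b := M)
    (f := fun a => ν / 2 * (M - 2 * a) * f a ^ 2) (f' := divTerm M ν f) (fa := 0) (fb := 0) hM
    (fun t ht => by
      have e1 := (hd t ht).hasDerivAt.pow 2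
      have e2 : HasDerivAt (fun a : ℝ => ν / 2 * (M - 2 * a)) (ν / 2 * (-(2 * 1))) t :=
        (((hasDerivAt_id t).const_mul 2).const_sub M).const_mul (ν / 2)
      have := e2.mul e1
      exact this.congr_deriv (by simp [divTerm]))
    ((intervalIntegrable_iff_integrableOn_Ioo_of_le hM.le).2 hdi)
    (by
      have : Tendsto (fun a : ℝ => ν / 2 * (M - 2 * a)) (𝓝[>] 0) (𝓝 (ν / 2 * (M - 2 * 0))) :=
        ((by fun_prop : Continuous fun a : ℝ => ν / 2 * (M - 2 * a)).tendsto 0).mono_left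
          nhdsWithin_le_nhds
      simpa using this.mul t0)
    (by
      have : Tendsto (fun a : ℝ => ν / 2 * (M - 2 * a)) (𝓝[<] M) (𝓝 (ν / 2 * (M - 2 * M))) :=
        ((by fun_prop : Continuous fun a : ℝ => ν / 2 * (M - 2 * a)).tendsto M).mono_left
          nhdsWithin_le_nhds
      simpa using this.mul t1)
  simpa using key

/-- The key identity. -/
lemma key_identity {ν : ℝ} {f : ℝ → ℝ}
    (hf : Admissible (4 * π) (fun a => a * (4 * π - a)) f) :
    (∫ a in Ioo (0:ℝ) (4 * π), (a * (4 * π - a) * (deriv f a) ^ 2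
        + 4 * π ^ 2 * ν ^ 2 * (f a) ^ 2 / (a * (4 * π - a))))
      = ν * (ν + 1) * (∫ a in Ioo (0:ℝ) (4 * π), (f a) ^ 2)
        + ∫ a in Ioo (0:ℝ) (4 * π), a * (4 * π - a) *
          (deriv f a - ν / 2 * (4 * π - 2 * a) / (a * (4 * π - a)) * f a) ^ 2 := by
  have hM : 0 < 4 * π := by positivity
  have hdi := divTerm_int (ν := ν) hf
  have hdz := divTerm_zero (ν := ν) hM hf
  obtain ⟨hm, -, hd, h1, h2, h3⟩ := hf
  have hA : IntegrableOn (fun a => a * (4 * π - a) * (deriv f a) ^ 2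
        + 4 * π ^ 2 * ν ^ 2 * (f a) ^ 2 / (a * (4 * π - a))) (Ioo 0 (4 * π)) := by
    have h3' : IntegrableOn (fun a => 4 * π ^ 2 * ν ^ 2 * (f a) ^ 2 / (a * (4 * π - a)))
        (Ioo 0 (4 * π)) := by
      simp only [mul_div_assoc]
      exact h3.const_mul (4 * π ^ 2 * ν ^ 2)
    exact h2.add h3'
  have hB := h1.const_mul (ν * (ν + 1))
  have e : ∫ a in Ioo (0:ℝ) (4 * π), a * (4 * π - a) *
          (deriv f a - ν / 2 * (4 * π - 2 * a) / (a * (4 * π - a)) * f a) ^ 2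
      = ∫ a in Ioo (0:ℝ) (4 * π), ((a * (4 * π - a) * (deriv f a) ^ 2
        + 4 * π ^ 2 * ν ^ 2 * (f a) ^ 2 / (a * (4 * π - a))) - ν * (ν + 1) * f a ^ 2
        - divTerm (4 * π) ν f a) := by
    refine setIntegral_congr_fun measurableSet_Ioo fun a ha => ?_
    have i1 : a ≠ 0 := ha.1.ne'
    have i2 : 4 * π - a ≠ 0 := (sub_pos.2 ha.2).ne'
    simp only [divTerm]
    field_simp
    ring
  have hAB : IntegrableOn (fun a => (a * (4 * π - a) * (deriv f a) ^ 2
        + 4 * π ^ 2 * ν ^ 2 * (f a) ^ 2 / (a * (4 * π - a))) - ν * (ν + 1) * f a ^ 2)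
        (Ioo 0 (4 * π)) := hA.sub hB
  rw [e, integral_sub hAB hdi, integral_sub hA hB, hdz, integral_const_mul]
  ring

lemma denom_pos {M : ℝ} {G f : ℝ → ℝ} (hf : Admissible M G f) :
    0 < ∫ a in Ioo (0:ℝ) M, (f a) ^ 2 := by
  obtain ⟨hm, hne, hd, h1, h2, h3⟩ := hf
  refine lt_of_le_of_ne (integral_nonneg fun a => sq_nonneg _) fun h => hne ?_
  have := (integral_eq_zero_iff_of_nonneg (fun a => sq_nonneg (f a)) h1).1 h.symm
  filter_upwards [this] with a ha
  simpa using ha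

lemma deriv_f0 {M ν a : ℝ} (ha : a ∈ Ioo 0 M) :
    HasDerivAt (fun a : ℝ => (a * (M - a)) ^ (ν / 2))
      (ν / 2 * (M - 2 * a) / (a * (M - a)) * (a * (M - a)) ^ (ν / 2)) a := by
  have hG : 0 < a * (M - a) := mul_pos ha.1 (sub_pos.2 ha.2)
  have e : HasDerivAt (fun a : ℝ => a * (M - a)) (M - 2 * a) a := by
    exact ((hasDerivAt_id a).mul ((hasDerivAt_id a).const_sub M)).congr_deriv (by simp; ring)
  convert e.rpow_const (p := ν / 2) (Or.inl hG.ne') using 1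
  rw [rpow_sub_one hG.ne']
  ring

lemma int_f0 {M ν : ℝ} (hM : 0 < M) (hν : 0 < ν) :
    IntegrableOn (fun a : ℝ => ((a * (M - a)) ^ (ν / 2)) ^ 2 / (a * (M - a))) (Ioo 0 M) := by
  have i1 : IntervalIntegrable (fun a : ℝ => a ^ (ν - 1)) volume 0 M :=
    intervalIntegral.intervalIntegrable_rpow' (by linarith)
  have i2 : IntervalIntegrable (fun a : ℝ => (M - a) ^ (ν - 1)) volume 0 M := by
    have := (i1.comp_sub_left M).symm
    simpa using this
  have j1 := i1.mul_continuousOn (g := fun a : ℝ => (M - a) ^ ν)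
    (Continuous.continuousOn (by
      exact (by fun_prop : Continuous fun a : ℝ => M - a).rpow_const fun _ => Or.inr hν.le))
  have j2 := i2.mul_continuousOn (g := fun a : ℝ => a ^ ν)
    (Continuous.continuousOn (continuous_id.rpow_const fun _ => Or.inr hν.le))
  have j := (j1.add j2).const_mul (1 / M)
  rw [intervalIntegrable_iff_integrableOn_Ioo_of_le hM.le] at j
  refine j.congr_fun (fun a ha => ?_) measurableSet_Ioo
  have p1 : 0 < a := ha.1
  have p2 : 0 < M - a := sub_pos.2 ha.2
  have hG : 0 < a * (M - a) := mul_pos p1 p2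
  have e : ((a * (M - a)) ^ (ν / 2)) ^ 2 = a ^ ν * (M - a) ^ ν := by
    rw [← mul_rpow p1.le p2.le, ← rpow_natCast, ← rpow_mul hG.le]
    congr 1; push_cast; ring
  simp only [e, Pi.add_apply]
  rw [rpow_sub_one p1.ne', rpow_sub_one p2.ne']
  have := p1.ne'
  have := p2.ne'
  field_simp
  ring

lemma adm_f0 {M ν : ℝ} (hM : 0 < M) (hν : 0 < ν) :
    Admissible M (fun a => a * (M - a)) (fun a => (a * (M - a)) ^ (ν / 2)) := by
  have hc : Continuous (fun a : ℝ => (a * (M - a)) ^ (ν / 2)) :=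
    (by fun_prop : Continuous fun a : ℝ => a * (M - a)).rpow_const
      fun _ => Or.inr (by positivity)
  refine ⟨hc.measurable, ?_, fun a ha => (deriv_f0 ha).differentiableAt, ?_, ?_, int_f0 hM hν⟩
  · intro h
    rw [ae_restrict_iff' measurableSet_Ioo] at h
    have h0 : volume (Ioo (0:ℝ) M) = 0 := by
      refine measure_mono_null (fun a ha => ?_) h
      have hG : 0 < a * (M - a) := mul_pos ha.1 (sub_pos.2 ha.2)
      simp only [mem_compl_iff, mem_ofPred_eq]
      exact fun hh => (rpow_pos_of_pos hG _).ne' (hh ha)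
    simp at h0
    linarith
  · exact ((hc.pow 2).continuousOn.integrableOn_Icc (a := 0) (b := M)).mono_set Ioo_subset_Icc_self
  · have := (integrableOn_Icc_iff_integrableOn_Ioo (μ := volume)).2 (int_f0 hM hν)
    have := this.continuousOn_mul (g := fun a => (ν / 2 * (M - 2 * a)) ^ 2) (by fun_prop)
      isCompact_Icc
    refine ((integrableOn_Icc_iff_integrableOn_Ioo (μ := volume)).1 this).congr_fun
      (fun a ha => ?_) measurableSet_Ioo
    have i1 : a ≠ 0 := ha.1.ne'
    have i2 : M - a ≠ 0 := (sub_pos.2 ha.2).ne'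
    simp only [(deriv_f0 (ν := ν) ha).deriv]
    field_simp

/-- For the spherical weight `G*(a) = a(4π - a)` on `(0, 4π)`, the infimum of the
Rayleigh quotient over the admissible class equals `ν(ν+1)`, and it is attained
by `f₀(a) = (a(4π - a))^{ν/2}`. -/
theorem kappa1_spherical_weight (ν : ℝ) (hν : ν ∈ Ioc (0:ℝ) (1/2)) :
    kappa1 (4 * π) ν (fun a => a * (4 * π - a)) = ν * (ν + 1) ∧
    Admissible (4 * π) (fun a => a * (4 * π - a))
      (fun a => (a * (4 * π - a)) ^ (ν / 2)) ∧
    rayleigh (4 * π) ν (fun a => a * (4 * π - a))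
      (fun a => (a * (4 * π - a)) ^ (ν / 2)) = ν * (ν + 1) := by
  have hM : 0 < 4 * π := by positivity
  have hadm := adm_f0 hM hν.1
  have hray : rayleigh (4 * π) ν (fun a => a * (4 * π - a))
      (fun a => (a * (4 * π - a)) ^ (ν / 2)) = ν * (ν + 1) := by
    rw [rayleigh, div_eq_iff (denom_pos hadm).ne', key_identity hadm]
    rw [add_eq_left]
    refine setIntegral_eq_zero_of_forall_eq_zero fun a ha => ?_
    rw [(deriv_f0 ha).deriv, sub_self]
    simp
  refine ⟨?_, hadm, hray⟩
  refine IsLeast.csInf_eq ⟨⟨_, hadm, hray.symm⟩, ?_⟩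
  rintro q ⟨f, hf, rfl⟩
  rw [rayleigh, le_div_iff₀ (denom_pos hf), key_identity hf]
  refine le_add_of_nonneg_right (setIntegral_nonneg measurableSet_Ioo fun a ha => ?_)
  exact mul_nonneg (mul_pos ha.1 (sub_pos.2 ha.2)).le (sq_nonneg _)
end
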